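/- (Transformation from E^{m,3} to {}_{2m+8}E_{2m+7}.) Let a, x ∈ ℂ^m and s, c_0, c_1, c_2, d_0, d_1, d_2 ∈ ℂ satisfy Σ_{i=1}^m a_i + Σ_{k=0}^{2}(c_k + d_k) = 2δ + 3s and d_2 = −Nδ for some N ∈ ℕ. Set t = d_1 + d_2 − d_0, e_k = δ + s − d_0 − c_k for k = 0, 1, 2, and u_i = δ + s − d_0 + x_i − a_i, v_i = d_1 + d_2 − s − x_i for i = 1,…,m. Then, for generic parameters (all brackets appearing in denominators nonzero): E^{m,3}( a; x | s; (c_0, c_1, c_2); (d_0, d_1, d_2) ) = ( [d_0]_N [δ+s−c_0−d_1]_N [δ+s−c_1−d_1]_N [δ+s−c_2−d_1]_N ) / ( [d_0−d_1]_N [δ+s−c_0]_N [δ+s−c_1]_N [δ+s−c_2]_N ) · ∏_{i=1}^m ( [δ+s+x_i]_N [δ+s+x_i−a_i−d_1]_N / ([δ+s+x_i−a_i]_N [δ+s+x_i−d_1]_N) ) · {}_{2m+8}E_{2m+7}( t; d_1, d_2, e_0, e_1, e_2, u_1,…,u_m, v_1,…,v_m ). -/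

import Mathlib

/-!
Write `[z] = f z` and let `Ψ_N(x; y; b, β)` be the sum, over multi-indices `μ` of weight `N`, of
`∏_j [x_j + b]_{μ_j} ∏_{p, j} [x_j + β_p]_{μ_j}` divided by
`∏_{i, j} [x_i - x_j - μ_j δ]_{μ_i} ∏_{k, j} [x_j + y_k]_{μ_j}`.
The heart of the proof is the duality `psi_dual`: if there are as many nodes `x_i`, `y_k` as
numerator parameters `b`, `β_p`, and `b + ∑ β_p = ∑ y_k - ∑ x_i`, then
`Ψ_N(x; y; b, β) = Ψ_N(y; x; -b, -β)`.

Apart from oddness, the duality rests on the elliptic partial fraction identity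
`∑_k ∏_j [y_k - α_j] / ∏_{l ≠ k} [y_k - y_l] = 0`, valid when `∑ α_j = ∑ y_k` (`pf_fintype`).
It follows by induction from the Riemann relation in the form of `three_term`; a parameter
configuration for which the induction step would divide by zero is reached by analytic
continuation (`entire_cancel`).

The duality is proved by induction on `N`. A partial fraction expansion of
`[(N+1)δ] ∏_j [x_j + b]_{μ_j}` (`expand_aux`) expresses `Ψ_{N+1}` through sums `Ψ_N` in which one
node `x_i` has been moved to `x_i + δ` (`psi_rec`). The induction hypothesis turns each of these into
a sum over multi-indices `ν` on the `y` side. For fixed `ν` the sum over `i` is converted into a sum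
over `k` by a further partial fraction identity (`pf_two`), and the reflected expansion
(`collect_aux`) collects the result into the dual sum `Ψ_{N+1}`.

For the transformation take as nodes `(x_1, …, x_m, -s - Nδ)` and `(δ + s - d_0, δ + s - d_1)`, and
as numerator parameters `c_0, c_1, c_2, a_j - x_j`; the balancing condition of the theorem is the
one required by the duality. A multi-index of weight `N` on the first set of nodes is an arbitrary
`μ ∈ ℕ^m` with `|μ| ≤ N`, the last entry being `N - |μ|`, and the summand becomes the summand of
`E^{m,3}` after reversing the factors that belong to the last node (`left_term`). On the dual side
there are two nodes, so the sum is over `k = 0, …, N`, and its summand is that of the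
one-dimensional series (`right_term`).

This argument divides by `[d_1 + lδ]` and `[δ + s + x_i + lδ]` for `l < N`, which may vanish
(`generic_identity` assumes they do not). In general, replace `(s, c_0, d_1)` by
`(s + z, c_0 + 2z, d_1 + z)`, which preserves the balancing condition. Since the zeros of `f` are
isolated, these brackets are nonzero for small `z ≠ 0`, and both sides are continuous at `z = 0`
(`finite_identity`).
-/

open Finset

/-- Shifted factorial `[x]_k = [x][x+δ]⋯[x+(k-1)δ]` with respect to the bracket `f`. -/
noncomputable def sf (f : ℂ → ℂ) (δ : ℂ) (x : ℂ) (k : ℕ) : ℂ :=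
  ∏ i ∈ Finset.range k, f (x + (i : ℂ) * δ)

/-- Difference product `Δ(x) = ∏_{i<j} [x_i - x_j]`. -/
noncomputable def Del (f : ℂ → ℂ) {m : ℕ} (x : Fin m → ℂ) : ℂ :=
  ∏ i : Fin m, ∏ j ∈ Finset.univ.filter (fun j => i < j), f (x i - x j)

/-- The multiple hypergeometric series `Φ^{m,n}_N(a; x | b; c)`. -/
noncomputable def Phi (f : ℂ → ℂ) (δ : ℂ) {m n : ℕ} (a x : Fin m → ℂ)
    (b c : Fin n → ℂ) (N : ℕ) : ℂ :=
  ∑ μ ∈ Finset.Nat.antidiagonalTuple m N,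
    (Del f (fun i => x i + (μ i : ℂ) * δ) / Del f x)
      * (∏ i, ∏ j, sf f δ (x i - x j + a j) (μ i) / sf f δ (x i - x j + δ) (μ i))
      * (∏ i, ∏ k, sf f δ (x i + b k) (μ i) / sf f δ (x i + c k) (μ i))

/-- The `μ`-th summand of the very well-poised series `E^{m,n}(a; x | s; u; v)`. -/
noncomputable def Eterm (f : ℂ → ℂ) (δ : ℂ) {m n : ℕ} (a x : Fin m → ℂ) (s : ℂ)
    (u v : Fin n → ℂ) (μ : Fin m → ℕ) : ℂ :=
  (Del f (fun i => x i + (μ i : ℂ) * δ) / Del f x)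
    * (∏ i, f (x i + s + (((∑ j, μ j) + μ i : ℕ) : ℂ) * δ) / f (x i + s))
    * (∏ j, (sf f δ (s + x j) (∑ i, μ i) / sf f δ (δ + s + x j - a j) (∑ i, μ i))
        * ∏ i, sf f δ (x i - x j + a j) (μ i) / sf f δ (x i - x j + δ) (μ i))
    * (∏ k, (sf f δ (v k) (∑ i, μ i) / sf f δ (δ + s - u k) (∑ i, μ i))
        * ∏ i, sf f δ (x i + u k) (μ i) / sf f δ (x i + δ + s - v k) (μ i))

/-- The very well-poised multiple series `E^{m,n}(a; x | s; u; v)`. -/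
noncomputable def Evw (f : ℂ → ℂ) (δ : ℂ) {m n : ℕ} (a x : Fin m → ℂ) (s : ℂ)
    (u v : Fin n → ℂ) : ℂ :=
  ∑' μ : Fin m → ℕ, Eterm f δ a x s u v μ

/-- The one-dimensional very well-poised series `_{r+3}E_{r+2}(s; u_1, …, u_r)`. -/
noncomputable def E1 (f : ℂ → ℂ) (δ : ℂ) {r : ℕ} (s : ℂ) (u : Fin r → ℂ) : ℂ :=
  ∑' k : ℕ, (f (s + 2 * (k : ℂ) * δ) / f s) * (sf f δ s k / sf f δ δ k)
    * ∏ i, sf f δ (u i) k / sf f δ (δ + s - u i) k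

/-! ### Elliptic partial fractions -/

/-- A product of entire functions vanishes identically only if a factor does. This permits division by
a factor that is not identically zero, also at its zeros. -/
lemma entire_cancel {g h : ℂ → ℂ} (hg : Differentiable ℂ g) (hh : Differentiable ℂ h)
    (hne : ∃ z, h z ≠ 0) (H : ∀ z, h z * g z = 0) (z : ℂ) : g z = 0 := by
  have h1 : AnalyticOnNhd ℂ h Set.univ := fun z _ => hh.analyticAt z
  have h2 : AnalyticOnNhd ℂ g Set.univ := fun z _ => hg.analyticAt z
  rcases h1.eq_zero_or_eq_zero_of_mul_eq_zero h2 (fun z _ => H z) isPreconnected_univ with h | h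
  · obtain ⟨w, hw⟩ := hne
    exact absurd (h w trivial) hw
  · exact h z trivial

lemma exists_cons_of_pos {A : Multiset ℂ} (h : 0 < A.card) : ∃ a B, A = a ::ₘ B := by
  obtain ⟨a, ha⟩ := Multiset.card_pos_iff_exists_mem.mp h
  exact ⟨a, Multiset.exists_cons_of_mem ha⟩

section
variable {f : ℂ → ℂ} (hodd : ∀ t : ℂ, f (-t) = -f t)
  (hRiem : ∀ x y u v : ℂ,
      f (x + y) * f (x - y) * f (u + v) * f (u - v) =
        f (x + u) * f (x - u) * f (y + v) * f (y - v)
          - f (x + v) * f (x - v) * f (y + u) * f (y - u))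
include hodd

lemma f_zero : f 0 = 0 := by
  have := hodd 0
  simp at this
  linear_combination this / 2

include hRiem
/-- The Riemann relation as a three-term relation between the products `[z - a][z - b]` with fixed
`a + b`: a function of this kind is a combination of the two that vanish at `z = q` and at
`z = p`. -/
lemma three_term (z a b p q : ℂ) :
    f (p + q - a - b) * (f (z - a) * f (z - b)) * f (p - q) =
      f (p - a) * f (p - b) * (f (z - q) * f (z - (a + b - q)))
        - f (q - a) * f (q - b) * (f (z - p) * f (z - (a + b - p))) := by
  have h := hRiem (z - (a + b) / 2) ((a - b) / 2) (p - (a + b) / 2) (q - (a + b) / 2)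
  have e1 : f ((a - b) / 2 - (p - (a + b) / 2)) = - f (p - a) := by rw [← hodd]; congr 1; ring
  have e2 : f ((a - b) / 2 - (q - (a + b) / 2)) = - f (q - a) := by rw [← hodd]; congr 1; ring
  rw [e1, e2] at h
  ring_nf at h ⊢
  linear_combination h

variable (hdiff : Differentiable ℂ f) (hf : ∃ z, f z ≠ 0)
include hdiff hf

/-- Elliptic partial fractions, with the zeros `α_j` collected in a multiset `A`. By `three_term`, two
factors `[y_k - a][y_k - b]` are replaced by products one factor of which vanishes at the node `y_i`
or at the node `y_j`, and either of the two resulting sums has one node less. -/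
lemma pf_finset {I : Type*} [DecidableEq I] (y : I → ℂ) (n : ℕ) :
    ∀ (s : Finset I) (A : Multiset ℂ), s.card = n → A.card = n → A.sum = ∑ i ∈ s, y i →
      (∀ i ∈ s, ∀ j ∈ s, i ≠ j → f (y i - y j) ≠ 0) →
      ∑ k ∈ s, (A.map fun a => f (y k - a)).prod / ∏ l ∈ s.erase k, f (y k - y l) = 0 := by
  induction n with
  | zero =>
    intro s A hs
    simp [Finset.card_eq_zero.mp hs]
  | succ n ih =>
    intro s A hs hA hsum hne
    -- if one of the zeros is the node `y i`, that node drops out of the sum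
    have hrem : ∀ i ∈ s, ∀ (a : ℂ) (R : Multiset ℂ), R.card + 1 = n →
        a + R.sum = ∑ j ∈ s.erase i, y j →
        ∑ k ∈ s, f (y k - y i) * f (y k - a) * (R.map fun a => f (y k - a)).prod
          / ∏ l ∈ s.erase k, f (y k - y l) = 0 := by
      intro i hi a R hR hs2
      have h := ih (s.erase i) (a ::ₘ R) (by rw [card_erase_of_mem hi, hs]; rfl) (by simpa using hR)
        (by simpa using hs2) (fun p hp q hq => hne p (mem_of_mem_erase hp) q (mem_of_mem_erase hq))
      rw [← Finset.add_sum_erase s _ hi]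
      simp only [sub_self, f_zero hodd, zero_mul, zero_div, zero_add]
      rw [← h]
      refine Finset.sum_congr rfl fun k hk => ?_
      have hki := ne_of_mem_erase hk
      have h1 := hne k (mem_of_mem_erase hk) i hi hki
      rw [← Finset.mul_prod_erase (s.erase k) _ (mem_erase.mpr ⟨hki.symm, hi⟩), erase_right_comm]
      simp only [Multiset.map_cons, Multiset.prod_cons]
      rw [mul_assoc, mul_div_mul_left _ _ h1]
    rcases Nat.lt_or_ge n 1 with hn | hn
    · obtain rfl : n = 0 := by omega
      obtain ⟨i, rfl⟩ := Finset.card_eq_one.mp hs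
      obtain ⟨a, rfl⟩ := Multiset.card_eq_one.mp hA
      simp at hsum
      simp [hsum, f_zero hodd]
    obtain ⟨i, hi, j, hj, hij⟩ := Finset.one_lt_card.mp (show 1 < s.card by omega)
    have hfij := hne i hi j hj hij
    have hsi := Finset.add_sum_erase s y hi
    have hsj := Finset.add_sum_erase s y hj
    obtain ⟨a, A, rfl⟩ := exists_cons_of_pos (A := A) (by omega)
    simp at hA
    obtain ⟨b, A, rfl⟩ := exists_cons_of_pos (A := A) (by omega)
    simp at hA
    have key : ∀ (a b : ℂ) (A : Multiset ℂ), A.card + 1 = n → a + b + A.sum = ∑ i ∈ s, y i →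
        f (y i + y j - a - b) * ∑ k ∈ s, f (y k - a) * f (y k - b) *
          (A.map fun a => f (y k - a)).prod / ∏ l ∈ s.erase k, f (y k - y l) = 0 := by
      intro a b A hA hs2
      refine (mul_left_inj' hfij).mp ?_
      have h1 := hrem j hj (a + b - y j) A hA (by linear_combination hs2 - hsj)
      have h2 := hrem i hi (a + b - y i) A hA (by linear_combination hs2 - hsi)
      calc _ = f (y i - a) * f (y i - b) * (∑ k ∈ s, f (y k - y j) * f (y k - (a + b - y j)) *
            (A.map fun a => f (y k - a)).prod / ∏ l ∈ s.erase k, f (y k - y l))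
            - f (y j - a) * f (y j - b) * (∑ k ∈ s, f (y k - y i) * f (y k - (a + b - y i)) *
            (A.map fun a => f (y k - a)).prod / ∏ l ∈ s.erase k, f (y k - y l)) := by
              rw [Finset.mul_sum, Finset.mul_sum, Finset.mul_sum, Finset.sum_mul,
                ← Finset.sum_sub_distrib]
              refine Finset.sum_congr rfl fun k _ => ?_
              have := three_term hodd hRiem (y k) a b (y i) (y j)
              linear_combination this * ((A.map fun a => f (y k - a)).prod
                / ∏ l ∈ s.erase k, f (y k - y l))
        _ = _ := by rw [h1, h2]; simp
    simp only [Multiset.map_cons, Multiset.prod_cons, Multiset.sum_cons] at hsum ⊢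
    simp only [← mul_assoc]
    rcases Nat.lt_or_ge n 2 with hn2 | hn2
    · -- `[y i + y j - a - b] = [0]` cannot be cancelled in `key`; the two terms are opposite by
      -- oddness
      have hA0 : A = 0 := Multiset.card_eq_zero.mp (by omega)
      subst hA0
      have hs' : s = {i, j} := by
        symm; apply Finset.eq_of_subset_of_card_le
        · intro k; simp only [mem_insert, mem_singleton]; rintro (rfl | rfl) <;> assumption
        · rw [card_pair hij]; omega
      subst hs'
      rw [sum_pair hij] at hsum
      have e1 : ({i, j} : Finset I).erase i = {j} := by ext k; simp; grind
      have e2 : ({i, j} : Finset I).erase j = {i} := by ext k; simp; grind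
      rw [sum_pair hij, e1, e2]
      simp only [Multiset.map_zero, Multiset.prod_zero, prod_singleton, Multiset.sum_zero] at hsum ⊢
      have g1 : f (y i - y j) = - f (y j - y i) := by rw [← hodd]; congr 1; ring
      have g2 : f (y i - a) = - f (y j - b) := by
        rw [← hodd]; congr 1; linear_combination -hsum
      have g3 : f (y i - b) = - f (y j - a) := by
        rw [← hodd]; congr 1; linear_combination -hsum
      rw [g1, g2, g3]
      ring
    · -- a third zero `c` leaves room to vary `(a, c)` as `(a + ε, c - ε)`, so that the factor
      -- `[y i + y j - a - b]` in `key` is not identically zero in `ε`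
      obtain ⟨c, A, rfl⟩ := exists_cons_of_pos (A := A) (by omega)
      simp at hA
      simp only [Multiset.map_cons, Multiset.prod_cons, Multiset.sum_cons] at hsum ⊢
      have := entire_cancel (g := fun ε => ∑ k ∈ s, f (y k - (a + ε)) * f (y k - b) *
          (f (y k - (c - ε)) * (A.map fun a => f (y k - a)).prod) / ∏ l ∈ s.erase k, f (y k - y l))
        (h := fun ε => f (y i + y j - (a + ε) - b)) (by fun_prop) (by fun_prop)
        (by obtain ⟨z, hz⟩ := hf
            refine ⟨y i + y j - a - b - z, ?_⟩
            convert hz using 2; ring)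
        (fun ε => by
          have := key (a + ε) b ((c - ε) ::ₘ A) (by simp; omega)
            (by simp only [Multiset.sum_cons]; linear_combination hsum)
          simpa only [Multiset.map_cons, Multiset.prod_cons] using this) 0
      simpa [← mul_assoc] using this

/-- The elliptic partial fraction identity
`∑_k ∏_j [y_k - α_j] / ∏_{l ≠ k} [y_k - y_l] = 0` for `∑ α_j = ∑ y_k`. -/
lemma pf_fintype {I J : Type*} [Fintype I] [Fintype J] [DecidableEq I] (y : I → ℂ) (α : J → ℂ)
    (hc : Fintype.card I = Fintype.card J) (hs : ∑ j, α j = ∑ i, y i)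
    (hne : ∀ i j, i ≠ j → f (y i - y j) ≠ 0) :
    ∑ k, (∏ j, f (y k - α j)) / ∏ l, (if l = k then 1 else f (y k - y l)) = 0 := by
  have := pf_finset hodd hRiem hdiff hf y (Fintype.card I) univ (univ.val.map α) rfl
    (by simp [hc]) hs (fun i _ j _ => hne i j)
  rw [← this]
  refine sum_congr rfl fun k _ => ?_
  congr 1
  · rw [Multiset.map_map]; rfl
  · rw [← Finset.mul_prod_erase univ _ (mem_univ k)]
    simp only [if_true, one_mul]
    exact prod_congr rfl fun l hl => by rw [if_neg (ne_of_mem_erase hl)]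
end

/-! ### Shifted factorials and multi-indices -/

section
variable (f : ℂ → ℂ) (δ : ℂ)

lemma sf_succ (x : ℂ) (n : ℕ) : sf f δ x (n + 1) = sf f δ x n * f (x + n * δ) := by
  simp [sf, prod_range_succ]

lemma sf_zero (x : ℂ) : sf f δ x 0 = 1 := by simp [sf]

lemma sf_succ' (x : ℂ) (n : ℕ) : sf f δ x (n + 1) = f x * sf f δ (x + δ) n := by
  simp only [sf, prod_range_succ', Nat.cast_zero, zero_mul, add_zero]
  rw [mul_comm]
  congr 1
  refine prod_congr rfl fun i _ => ?_
  congr 1; push_cast; ring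

lemma sf_shift (x : ℂ) (n : ℕ) : f x * sf f δ (x + δ) n = sf f δ x n * f (x + n * δ) := by
  rw [← sf_succ', sf_succ]

lemma sf_add (x : ℂ) (m n : ℕ) : sf f δ x (m + n) = sf f δ x m * sf f δ (x + m * δ) n := by
  simp only [sf, prod_range_add]
  congr 1
  refine prod_congr rfl fun i _ => ?_
  congr 1; push_cast; ring

lemma sf_ne {x : ℂ} {n N : ℕ} (hn : n ≤ N) (h : ∀ l : ℕ, l < N → f (x + l * δ) ≠ 0) :
    sf f δ x n ≠ 0 :=
  prod_ne_zero_iff.mpr fun i hi => h i (by have := mem_range.mp hi; omega)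

variable {f}

/-- Reflection: reversing the factors of `[x]_n` gives `(-1)^n [δ - x - nδ]_n`. -/
lemma sf_refl (hodd : ∀ t : ℂ, f (-t) = -f t) {x y : ℂ} {n : ℕ} (h : x + y + n * δ = δ) :
    sf f δ x n = (-1) ^ n * sf f δ y n := by
  unfold sf
  have hc : (-1 : ℂ) ^ n = ∏ _i ∈ range n, (-1) := by simp
  rw [← prod_range_reflect (fun i : ℕ => f (y + i * δ)) n, hc, ← prod_mul_distrib]
  refine prod_congr rfl fun i hi => ?_
  have : i + 1 ≤ n := by have := mem_range.mp hi; omega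
  rw [neg_one_mul, ← hodd]
  congr 1
  rw [show n - 1 - i = n - (i + 1) by omega, Nat.cast_sub this]
  push_cast
  linear_combination h

variable {δ}

lemma sf_differentiable (hdiff : Differentiable ℂ f) (n : ℕ) :
    Differentiable ℂ fun z => sf f δ z n := by
  unfold sf; fun_prop

end

section reindex
variable {ι : Type*} [Fintype ι] [DecidableEq ι]

/-- The multi-index `ν` with its `i`-th entry increased by one. -/
def bump (ν : ι → ℕ) (i : ι) : ι → ℕ := fun j => if j = i then ν j + 1 else ν j

/-- The vector `x` with `δ` added to its `i`-th entry. -/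
def addAt (x : ι → ℂ) (δ : ℂ) (i : ι) : ι → ℂ := fun j => if j = i then x j + δ else x j

omit [Fintype ι] in
lemma bump_same (ν : ι → ℕ) (i : ι) : bump ν i i = ν i + 1 := if_pos rfl

omit [Fintype ι] in
lemma bump_ne (ν : ι → ℕ) {i j : ι} (h : j ≠ i) : bump ν i j = ν j := if_neg h

omit [Fintype ι] in
lemma addAt_same (x : ι → ℂ) (δ : ℂ) (i : ι) : addAt x δ i i = x i + δ := if_pos rfl

omit [Fintype ι] in
lemma addAt_ne (x : ι → ℂ) (δ : ℂ) {i j : ι} (h : j ≠ i) : addAt x δ i j = x j := if_neg h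

lemma sum_bump (ν : ι → ℕ) (i : ι) : ∑ j, bump ν i j = ∑ j, ν j + 1 := by
  rw [← add_sum_erase univ _ (mem_univ i), ← add_sum_erase univ ν (mem_univ i), bump_same,
    sum_congr rfl fun j hj => bump_ne ν (ne_of_mem_erase hj)]
  ring

lemma sum_addAt (x : ι → ℂ) (δ : ℂ) (i : ι) : ∑ j, addAt x δ i j = ∑ j, x j + δ := by
  rw [← add_sum_erase univ _ (mem_univ i), ← add_sum_erase univ x (mem_univ i), addAt_same,
    sum_congr rfl fun j hj => addAt_ne x δ (ne_of_mem_erase hj)]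
  ring

/-- Summation over pairs of an index `i` and a multi-index `μ` of weight `N + 1`, rewritten in terms of
`ν = μ - e_i`, provided the terms with `μ_i = 0` vanish. -/
lemma sum_antidiag_reindex (N : ℕ) (h : ι → (ι → ℕ) → ℂ) (h0 : ∀ i μ, μ i = 0 → h i μ = 0) :
    ∑ μ ∈ piAntidiag univ (N + 1), ∑ i, h i μ =
      ∑ ν ∈ piAntidiag univ N, ∑ i, h i (bump ν i) := by
  rw [sum_comm, sum_comm (s := piAntidiag univ N)]
  refine sum_congr rfl fun i _ => ?_
  symm
  refine sum_of_injOn (fun ν => bump ν i) ?_ ?_ ?_ (fun _ _ => rfl)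
  · intro a _ b _ hab
    ext j
    have := congrFun hab j
    by_cases hj : j = i
    · subst hj; simpa [bump_same] using this
    · simpa [bump_ne _ hj] using this
  · intro ν hν
    simp only [mem_coe, mem_piAntidiag] at hν ⊢
    exact ⟨by rw [sum_bump, hν.1], by simp⟩
  · intro μ hμ hn
    apply h0
    by_contra hne
    apply hn
    have h2 : bump (fun j => if j = i then μ j - 1 else μ j) i = μ := by
      ext j
      by_cases hj : j = i
      · subst hj; rw [bump_same, if_pos rfl]; omega
      · rw [bump_ne _ hj, if_neg hj]
    refine ⟨_, ?_, h2⟩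
    simp only [mem_coe, mem_piAntidiag] at hμ ⊢
    have h3 := hμ.1
    rw [← h2, sum_bump] at h3
    exact ⟨by omega, by simp⟩

variable (f : ℂ → ℂ) (δ : ℂ)

lemma prod_sf_shift_left (x : ι → ℂ) (b : ℂ) (ν : ι → ℕ) (i : ι) :
    ∏ j, sf f δ (x j + b) (bump ν i j) =
      f (x i + b) * ∏ j, sf f δ (addAt x δ i j + b) (ν j) := by
  rw [← mul_prod_erase univ _ (mem_univ i), ← mul_prod_erase univ _ (mem_univ i), ← mul_assoc]
  congr 1
  · rw [bump_same, sf_succ', addAt_same]; ring_nf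
  · refine prod_congr rfl fun j hj => ?_
    rw [bump_ne _ (ne_of_mem_erase hj), addAt_ne _ _ (ne_of_mem_erase hj)]

lemma prod_sf_shift_right (x : ι → ℂ) (b : ℂ) (ν : ι → ℕ) (i : ι) :
    ∏ j, sf f δ (x j + b) (bump ν i j) =
      f (x i + b + ν i * δ) * ∏ j, sf f δ (x j + b) (ν j) := by
  rw [← mul_prod_erase univ _ (mem_univ i), ← mul_prod_erase univ _ (mem_univ i), ← mul_assoc]
  congr 1
  · rw [bump_same, sf_succ]; ring
  · refine prod_congr rfl fun j hj => ?_
    rw [bump_ne _ (ne_of_mem_erase hj)]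

/-- The product `∏_{a, b} [x_a - x_b - μ_b δ]_{μ_a}`. Up to sign it is
`Δ(x) / Δ(x + μδ) · ∏_{i, j} [x_i - x_j + δ]_{μ_i}`, see `bridge`. -/
noncomputable def Dn (x : ι → ℂ) (μ : ι → ℕ) : ℂ :=
  ∏ b, ∏ a, sf f δ (x a + -(x b + μ b * δ)) (μ a)

/-- Increasing one entry of the multi-index, with the new factor split off at the lower end: this moves
the corresponding node by `δ`. -/
lemma Dn_shift_left (x : ι → ℂ) (ν : ι → ℕ) (i : ι) :
    Dn f δ x (bump ν i) =
      (∏ b, f (x i - (x b + bump ν i b * δ))) * Dn f δ (addAt x δ i) ν := by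
  unfold Dn
  simp only [prod_sf_shift_left, prod_mul_distrib, sub_eq_add_neg]
  congr 1
  refine prod_congr rfl fun b _ => prod_congr rfl fun a _ => ?_
  congr 1
  by_cases hb : b = i
  · subst hb; rw [bump_same, addAt_same]; push_cast; ring
  · rw [bump_ne _ hb, addAt_ne _ _ hb]

/-- The partial fraction denominator `∏_{l ≠ k} [y_k - y_l]`. -/
noncomputable def pd (y : ι → ℂ) (k : ι) : ℂ := ∏ l, if l = k then 1 else f (y k - y l)

lemma pd_neg (hodd : ∀ t : ℂ, f (-t) = -f t) (y : ι → ℂ) (k : ι) :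
    pd f (fun i => -y i) k = -(-1) ^ Fintype.card ι * pd f y k := by
  unfold pd
  rw [← mul_prod_erase univ _ (mem_univ k), ← mul_prod_erase univ (fun l => if l = k then 1 else f (y k - y l)) (mem_univ k)]
  have : Fintype.card ι = (univ.erase k).card + 1 := by
    rw [card_erase_of_mem (mem_univ k), card_univ]
    have := Fintype.card_pos_iff.mpr ⟨k⟩
    omega
  rw [this, pow_succ, ← prod_const]
  simp only [if_true, one_mul, mul_neg, mul_one, neg_neg]
  rw [← prod_mul_distrib]
  refine prod_congr rfl fun l hl => ?_
  rw [if_neg (ne_of_mem_erase hl), if_neg (ne_of_mem_erase hl), neg_one_mul, ← hodd]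
  congr 1; ring

lemma pd_ne {y : ι → ℂ} (hne : ∀ i j, i ≠ j → f (y i - y j) ≠ 0) (k : ι) : pd f y k ≠ 0 := by
  refine prod_ne_zero_iff.mpr fun l _ => ?_
  split_ifs with h
  · exact one_ne_zero
  · exact hne _ _ (Ne.symm h)

/-- Increasing one entry of the multi-index, with the new factor split off at the upper end: the nodes
stay in place. -/
lemma Dn_shift_right (hodd : ∀ t : ℂ, f (-t) = -f t) (y : ι → ℂ) (ν : ι → ℕ) (k : ι) :
    Dn f δ y (bump ν k) * pd f (fun a => y a + bump ν k a * δ) k =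
      - (Dn f δ y ν * pd f (fun a => y a + ν a * δ) k *
        ∏ a, f (y k + bump ν k k * δ - y a)) := by
  unfold Dn pd
  simp only [prod_sf_shift_right]
  rw [← mul_prod_erase univ _ (mem_univ k), ← mul_prod_erase univ (fun b => ∏ a, sf f δ (y a + -(y b + ν b * δ)) (ν a)) (mem_univ k),
    ← mul_prod_erase univ (fun l => if l = k then 1 else f (y k + ν k * δ - (y l + ν l * δ))) (mem_univ k)]
  rw [prod_mul_distrib]
  have e1 : ∏ b ∈ univ.erase k, f (y k + -(y b + (bump ν k b : ℂ) * δ) + ν k * δ) =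
      ∏ b ∈ univ.erase k, (if b = k then 1 else f (y k + ν k * δ - (y b + ν b * δ))) := by
    refine prod_congr rfl fun l hl => ?_
    rw [if_neg (ne_of_mem_erase hl)]
    rw [bump_ne _ (ne_of_mem_erase hl)]
    ring_nf
  have e2 : ∏ b ∈ univ.erase k, ∏ j, sf f δ (y j + -(y b + (bump ν k b : ℂ) * δ)) (ν j) =
      ∏ b ∈ univ.erase k, ∏ j, sf f δ (y j + -(y b + ν b * δ)) (ν j) := by
    refine prod_congr rfl fun l hl => ?_
    rw [bump_ne _ (ne_of_mem_erase hl)]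
  rw [e1, e2]
  have e3 : f (y k + -(y k + (bump ν k k : ℂ) * δ) + ν k * δ) *
      (∏ j, sf f δ (y j + -(y k + (bump ν k k : ℂ) * δ)) (ν j)) *
      ∏ l, (if l = k then 1 else f (y k + (bump ν k k : ℂ) * δ - (y l + (bump ν k l : ℂ) * δ))) =
      -((∏ a, sf f δ (y a + -(y k + ν k * δ)) (ν a)) * ∏ a, f (y k + (bump ν k k : ℂ) * δ - y a)) := by
    have h1 : ∀ a, sf f δ (y a + -(y k + (bump ν k k : ℂ) * δ)) (ν a) *
        f (y k + (bump ν k k : ℂ) * δ - (y a + ν a * δ)) =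
        sf f δ (y a + -(y k + ν k * δ)) (ν a) * f (y k + (bump ν k k : ℂ) * δ - y a) := by
      intro a
      have h := sf_shift f δ (y a + -(y k + (bump ν k k : ℂ) * δ)) (ν a)
      have g1 := hodd (y k + (bump ν k k : ℂ) * δ - (y a + ν a * δ))
      have g2 := hodd (y k + (bump ν k k : ℂ) * δ - y a)
      rw [show -(y k + (bump ν k k : ℂ) * δ - (y a + ν a * δ)) = y a + -(y k + (bump ν k k : ℂ) * δ) + ν a * δ by ring] at g1
      rw [show -(y k + (bump ν k k : ℂ) * δ - y a) = y a + -(y k + (bump ν k k : ℂ) * δ) by ring] at g2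
      rw [g1, g2, show y a + -(y k + (bump ν k k : ℂ) * δ) + δ = y a + -(y k + ν k * δ) by rw [bump_same]; push_cast; ring] at h
      linear_combination h
    rw [← prod_mul_distrib, ← prod_congr rfl (fun a _ => h1 a), prod_mul_distrib]
    rw [← mul_prod_erase univ (fun a => f (y k + (bump ν k k : ℂ) * δ - (y a + ν a * δ))) (mem_univ k),
      ← mul_prod_erase univ (fun l => if l = k then 1 else _) (mem_univ k)]
    have h2 : ∏ x ∈ univ.erase k, (if x = k then 1 else f (y k + (bump ν k k : ℂ) * δ - (y x + (bump ν k x : ℂ) * δ)))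
      = ∏ x ∈ univ.erase k, f (y k + (bump ν k k : ℂ) * δ - (y x + ν x * δ)) := by
      refine prod_congr rfl fun l hl => ?_
      rw [if_neg (ne_of_mem_erase hl)]
      rw [bump_ne _ (ne_of_mem_erase hl)]
    rw [h2, show f (y k + -(y k + (bump ν k k : ℂ) * δ) + ν k * δ) = - f (y k + (bump ν k k : ℂ) * δ - (y k + ν k * δ)) by
      rw [← hodd]; congr 1; ring]
    simp only [if_true, one_mul]
    ring
  simp only [if_true, one_mul]
  linear_combination e3 * ((∏ b ∈ univ.erase k, (if b = k then 1 else f (y k + ν k * δ - (y b + ν b * δ)))) * ∏ b ∈ univ.erase k, ∏ j, sf f δ (y j + -(y b + ν b * δ)) (ν j))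

end reindex

/-! ### Two expansions of a product of shifted factorials -/

section
variable {f : ℂ → ℂ} (hodd : ∀ t : ℂ, f (-t) = -f t)
  (hRiem : ∀ x y u v : ℂ,
      f (x + y) * f (x - y) * f (u + v) * f (u - v) =
        f (x + u) * f (x - u) * f (y + v) * f (y - v)
          - f (x + v) * f (x - v) * f (y + u) * f (y - u))
  (hdiff : Differentiable ℂ f) (hf : ∃ z, f z ≠ 0)
variable {ι κ π : Type*} [Fintype ι] [DecidableEq ι] [Fintype κ] [DecidableEq κ] [Fintype π]
include hdiff hf

omit [DecidableEq ι] in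
lemma exists_prod_ne (c : ι → ℂ) : ∃ z, ∏ j, f (c j + z) ≠ 0 := by
  classical
  have : ∀ s : Finset ι, ∃ z, ∏ j ∈ s, f (c j + z) ≠ 0 := by
    intro s
    induction s using Finset.induction_on with
    | empty => simp
    | insert a s ha ih =>
      by_contra! H
      obtain ⟨w, hw⟩ := hf
      have h := entire_cancel (g := fun z => f (c a + z)) (h := fun z => ∏ j ∈ s, f (c j + z))
        (by fun_prop) (by fun_prop) ih (fun z => by
          have := H z
          rw [prod_insert ha] at this
          linear_combination this) (w - c a)
      apply hw
      simpa using h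
  exact this univ

include hodd hRiem

/-- Partial fractions with one distinguished node `z`, whose numerator parameter `z + S` is determined
by the balancing condition. -/
lemma pf_extra (X Y : ι → ℂ) (z S : ℂ) (hS : ∑ i, X i = ∑ i, Y i + S)
    (hne : ∀ i j, i ≠ j → f (X i - X j) ≠ 0) (hz : ∀ i, f (X i - z) ≠ 0) :
    ∑ i, (∏ j, f (X i - Y j)) * f (X i - z - S) / (pd f X i * f (X i - z))
      + (∏ j, f (z - Y j)) * f (-S) / ∏ j, f (z - X j) = 0 := by
  have hz' : ∀ i, f (z - X i) ≠ 0 := fun i => by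
    rw [show z - X i = -(X i - z) by ring, hodd]; exact neg_ne_zero.mpr (hz i)
  have := pf_fintype hodd hRiem hdiff hf (I := Option ι) (J := Option ι)
    (fun o => o.elim z X) (fun o => o.elim (z + S) Y) rfl
    (by simp [Fintype.sum_option]; linear_combination -hS)
    (by rintro (_ | i) (_ | j) h
        · exact absurd rfl h
        · exact hz' j
        · exact hz i
        · exact hne i j (fun h' => h (by rw [h'])))
  simp only [Fintype.sum_option, Fintype.prod_option, Option.elim, if_true, one_mul,
    Option.some.injEq, reduceCtorEq, if_false] at this
  rw [add_comm, ← this]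
  congr 1
  · congr 1
    rw [show z - (z + S) = -S by ring]; ring
  · refine sum_congr rfl fun i _ => ?_
    unfold pd
    rw [show X i - (z + S) = X i - z - S by ring]
    ring

/-- Expansion of `[(N+1)δ] ∏_j [x_j + β]_{μ_j}` for `|μ| = N + 1`. It is
`∏_j [x_j + β - δ]_{μ_j}` times `pf_extra` with extra node `δ - β` and numerator parameters
`x_b + μ_b δ`. The values of `β` at which a denominator `[x_j + β - δ]` vanishes are covered by
`entire_cancel`.
The natural subtraction `μ_j - 1` is harmless: for `μ_i = 0` the coefficient contains the factor
`[0] = 0`. -/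
lemma expand_aux (x : ι → ℂ) (δ : ℂ) (μ : ι → ℕ) (N : ℕ) (hμ : ∑ i, μ i = N + 1)
    (hne : ∀ i j, i ≠ j → f (x i - x j) ≠ 0) (β : ℂ) :
    f ((N + 1) * δ) * ∏ j, sf f δ (x j + β) (μ j) +
      ∑ i, (∏ b, f (x i - (x b + μ b * δ))) / pd f x i * f (x i + β + N * δ) *
        ∏ j, (if j = i then sf f δ (x j + β) (μ j - 1) else sf f δ (x j + β - δ) (μ j)) = 0 := by
  have hsd : ∀ n, Differentiable ℂ fun z => sf f δ z n := fun n => sf_differentiable hdiff n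
  refine entire_cancel (g := fun β => f ((N + 1) * δ) * ∏ j, sf f δ (x j + β) (μ j) +
      ∑ i, (∏ b, f (x i - (x b + μ b * δ))) / pd f x i * f (x i + β + N * δ) *
        ∏ j, (if j = i then sf f δ (x j + β) (μ j - 1) else sf f δ (x j + β - δ) (μ j)))
    (h := fun β => ∏ j, f ((x j - δ) + β)) ?_ (by fun_prop)
    (exists_prod_ne hdiff hf _) ?_ β
  · have h1 : ∀ j n, Differentiable ℂ fun β => sf f δ (x j + β) n := fun j n =>
      (hsd n).comp (by fun_prop : Differentiable ℂ fun β => x j + β)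
    have h2 : ∀ j n, Differentiable ℂ fun β => sf f δ (x j + β - δ) n := fun j n =>
      (hsd n).comp (by fun_prop : Differentiable ℂ fun β => x j + β - δ)
    have h3 : ∀ i j, Differentiable ℂ fun β => (if j = i then sf f δ (x j + β) (μ j - 1) else sf f δ (x j + β - δ) (μ j)) := by
      intro i j
      split_ifs
      · exact h1 _ _
      · exact h2 _ _
    fun_prop
  · intro β
    by_cases hc : ∏ j, f ((x j - δ) + β) = 0
    · rw [hc, zero_mul]
    replace hc := prod_ne_zero_iff.mp hc
    apply mul_eq_zero_of_right
    have hz : ∀ i, f (x i - (δ - β)) ≠ 0 := fun i => by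
      convert hc i (mem_univ i) using 2; ring
    have hsum : ((∑ i, μ i : ℕ) : ℂ) = N + 1 := by rw [hμ]; push_cast; ring
    push_cast at hsum
    have key := pf_extra hodd hRiem hdiff hf x (fun b => x b + μ b * δ) (δ - β) (-((N + 1) * δ))
      (by rw [sum_add_distrib, ← sum_mul, hsum]; ring) hne hz
    have hK1 : (∏ j, f (δ - β - (x j + μ j * δ))) / (∏ j, f (δ - β - x j)) *
        ∏ j, sf f δ (x j + β - δ) (μ j) = ∏ j, sf f δ (x j + β) (μ j) := by
      rw [← prod_div_distrib, ← prod_mul_distrib]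
      refine prod_congr rfl fun j _ => ?_
      have h := sf_shift f δ (x j + β - δ) (μ j)
      rw [show δ - β - (x j + μ j * δ) = -(x j + β - δ + μ j * δ) by ring,
        show δ - β - x j = -(x j - (δ - β)) by ring, hodd, hodd]
      rw [show x j + β - δ + δ = x j + β by ring, show x j + β - δ = x j - (δ - β) by ring] at h
      rw [show x j + β - δ = x j - (δ - β) by ring, neg_div_neg_eq, div_mul_eq_mul_div,
        div_eq_iff (hz j)]
      linear_combination -h
    have hK2 : ∀ i, (∏ b, f (x i - (x b + μ b * δ))) *
        ∏ j, (if j = i then sf f δ (x j + β) (μ j - 1) else sf f δ (x j + β - δ) (μ j)) =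
        (∏ b, f (x i - (x b + μ b * δ))) * (∏ j, sf f δ (x j + β - δ) (μ j)) / f (x i - (δ - β)) := by
      intro i
      rcases Nat.eq_zero_or_pos (μ i) with h0 | hpos
      · have : ∏ b, f (x i - (x b + μ b * δ)) = 0 :=
          prod_eq_zero (mem_univ i) (by simp [h0, f_zero hodd])
        simp [this]
      · rw [mul_div_assoc]
        congr 1
        rw [eq_div_iff (hz i), ← mul_prod_erase univ _ (mem_univ i),
          ← mul_prod_erase univ (fun j => sf f δ (x j + β - δ) (μ j)) (mem_univ i), if_pos rfl,
          prod_congr rfl fun j hj => if_neg (ne_of_mem_erase hj)]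
        obtain ⟨n, hn⟩ : ∃ n, μ i = n + 1 := ⟨μ i - 1, by omega⟩
        rw [hn, sf_succ', show x i + β - δ + δ = x i + β by ring,
          show x i + β - δ = x i - (δ - β) by ring]
        simp only [Nat.add_sub_cancel]
        ring
    calc _ = (∏ j, sf f δ (x j + β - δ) (μ j)) * (∑ i, (∏ j, f (x i - (x j + μ j * δ))) *
            f (x i - (δ - β) - -((N + 1) * δ)) / (pd f x i * f (x i - (δ - β)))
          + (∏ j, f (δ - β - (x j + μ j * δ))) * f (- -((N + 1) * δ)) / ∏ j, f (δ - β - x j)) := by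
          rw [mul_add, add_comm, mul_sum]
          congr 1
          · refine sum_congr rfl fun i _ => ?_
            have h := hK2 i
            rw [show x i - (δ - β) - -((N + 1) * δ) = x i + β + N * δ by ring]
            rw [mul_comm (pd f x i), ← div_div]
            linear_combination h * (f (x i + β + N * δ) / pd f x i)
          · rw [neg_neg, ← hK1]; ring
      _ = 0 := by rw [key, mul_zero]

/-- The image of `expand_aux` under the reflection `x_a = -(y_a + ν_a δ)`. -/
lemma collect_aux (y : ι → ℂ) (δ : ℂ) (ν : ι → ℕ) (N : ℕ) (hν : ∑ i, ν i = N + 1)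
    (hne : ∀ i j, i ≠ j → f ((y i + ν i * δ) - (y j + ν j * δ)) ≠ 0) (β : ℂ) :
    ∑ k, (∏ a, f (y k + ν k * δ - y a)) / pd f (fun a => y a + ν a * δ) k *
        f (y k + ν k * δ + β - (N + 1) * δ) *
        ∏ l, (if l = k then sf f δ (y l + β + δ) (ν l - 1) else sf f δ (y l + β + δ) (ν l)) =
      f ((N + 1) * δ) * ∏ l, sf f δ (y l + β) (ν l) := by
  have h := expand_aux hodd hRiem hdiff hf (fun a => -(y a + ν a * δ)) δ ν N hν
    (fun i j hij => by
      rw [show -(y i + ν i * δ) - -(y j + ν j * δ) = -((y i + ν i * δ) - (y j + ν j * δ)) by ring, hodd]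
      exact neg_ne_zero.mpr (hne i j hij)) (-β + δ)
  have e1 : ∏ j, sf f δ (-(y j + ν j * δ) + (-β + δ)) (ν j) =
      (∏ j, (-1) ^ (ν j)) * ∏ l, sf f δ (y l + β) (ν l) := by
    rw [← prod_mul_distrib]
    exact prod_congr rfl fun j _ => sf_refl δ hodd (by ring)
  rw [e1] at h
  have hsq : (∏ j, (-1 : ℂ) ^ (ν j)) * ∏ j, (-1 : ℂ) ^ (ν j) = 1 := by
    rw [← prod_mul_distrib]
    refine prod_eq_one fun j _ => ?_
    rw [← mul_pow]; simp
  have hsq2 : ((-1 : ℂ) ^ Fintype.card ι) * ((-1 : ℂ) ^ Fintype.card ι) = 1 := by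
    rw [← mul_pow]; simp
  have e2 : ∑ i, (∏ b, f (-(y i + ν i * δ) - (-(y b + ν b * δ) + ν b * δ))) /
        pd f (fun a => -(y a + ν a * δ)) i * f (-(y i + ν i * δ) + (-β + δ) + N * δ) *
        ∏ j, (if j = i then sf f δ (-(y j + ν j * δ) + (-β + δ)) (ν j - 1)
          else sf f δ (-(y j + ν j * δ) + (-β + δ) - δ) (ν j)) =
      -(∏ j, (-1 : ℂ) ^ (ν j)) * ∑ k, (∏ a, f (y k + ν k * δ - y a)) / pd f (fun a => y a + ν a * δ) k *
        f (y k + ν k * δ + β - (N + 1) * δ) *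
        ∏ l, (if l = k then sf f δ (y l + β + δ) (ν l - 1) else sf f δ (y l + β + δ) (ν l)) := by
    rw [mul_sum]
    refine sum_congr rfl fun k _ => ?_
    have g1 : ∏ b, f (-(y k + ν k * δ) - (-(y b + ν b * δ) + ν b * δ)) =
        (-1) ^ Fintype.card ι * ∏ a, f (y k + ν k * δ - y a) := by
      rw [← card_univ, ← prod_const, ← prod_mul_distrib]
      refine prod_congr rfl fun b _ => ?_
      rw [neg_one_mul, ← hodd]; congr 1; ring
    have g2 : f (-(y k + ν k * δ) + (-β + δ) + N * δ) = - f (y k + ν k * δ + β - (N + 1) * δ) := by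
      rw [← hodd]; congr 1; ring
    rw [g1, g2, pd_neg _ hodd]
    have hsgn : ∀ P Q : ℂ, (-1 : ℂ) ^ Fintype.card ι * P / (-(-1) ^ Fintype.card ι * Q) = -(P / Q) := by
      intro P Q
      rw [neg_mul, div_neg, mul_div_mul_left _ _ (by simp)]
    rw [hsgn]
    rcases Nat.eq_zero_or_pos (ν k) with h0 | hpos
    · have : ∏ a, f (y k + ν k * δ - y a) = 0 :=
        prod_eq_zero (mem_univ k) (by simp [h0, f_zero hodd])
      simp [this]
    have g3 : ∏ j, (if j = k then sf f δ (-(y j + ν j * δ) + (-β + δ)) (ν j - 1)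
          else sf f δ (-(y j + ν j * δ) + (-β + δ) - δ) (ν j)) =
        -(∏ j, (-1 : ℂ) ^ (ν j)) *
        ∏ l, (if l = k then sf f δ (y l + β + δ) (ν l - 1) else sf f δ (y l + β + δ) (ν l)) := by
      rw [← mul_prod_erase univ _ (mem_univ k),
        ← mul_prod_erase univ (fun j => (-1 : ℂ) ^ (ν j)) (mem_univ k),
        ← mul_prod_erase univ (fun l => if l = k then sf f δ (y l + β + δ) (ν l - 1)
          else sf f δ (y l + β + δ) (ν l)) (mem_univ k), if_pos rfl, if_pos rfl,
        prod_congr rfl fun j hj => if_neg (ne_of_mem_erase hj),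
        prod_congr rfl fun j hj => if_neg (ne_of_mem_erase hj)]
      have g4 : ∏ j ∈ univ.erase k, sf f δ (-(y j + ν j * δ) + (-β + δ) - δ) (ν j) =
          (∏ j ∈ univ.erase k, (-1 : ℂ) ^ (ν j)) * ∏ j ∈ univ.erase k, sf f δ (y j + β + δ) (ν j) := by
        rw [← prod_mul_distrib]
        exact prod_congr rfl fun j _ => sf_refl δ hodd (by ring)
      obtain ⟨n, hn⟩ : ∃ n, ν k = n + 1 := ⟨ν k - 1, by omega⟩
      rw [g4, hn, sf_refl δ hodd (y := y k + β + δ) (by push_cast; ring), pow_succ]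
      simp only [Nat.add_sub_cancel]
      ring
    rw [g3]
    ring
  rw [e2] at h
  linear_combination (-(∏ j, (-1 : ℂ) ^ (ν j))) * h + (f ((N + 1) * δ) * (∏ l, sf f δ (y l + β) (ν l)) - ∑ k, (∏ a, f (y k + ν k * δ - y a)) / pd f (fun a => y a + ν a * δ) k *
        f (y k + ν k * δ + β - (N + 1) * δ) *
        ∏ l, (if l = k then sf f δ (y l + β + δ) (ν l - 1) else sf f δ (y l + β + δ) (ν l))) * hsq
end

/-! ### The duality -/

section
variable {f : ℂ → ℂ} (hodd : ∀ t : ℂ, f (-t) = -f t)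
  (hRiem : ∀ x y u v : ℂ,
      f (x + y) * f (x - y) * f (u + v) * f (u - v) =
        f (x + u) * f (x - u) * f (y + v) * f (y - v)
          - f (x + v) * f (x - v) * f (y + u) * f (y - u))
  (hdiff : Differentiable ℂ f) (hf : ∃ z, f z ≠ 0)
variable {ι κ π J : Type*} [Fintype ι] [DecidableEq ι] [Fintype κ] [DecidableEq κ] [Fintype π]
  [Fintype J]

/-- The summand of the dual sums, with node vectors `x` and `y` and numerator parameters `b` and
`β_p`. The parameter `b` is kept apart because it is the one to which the recursion `psi_rec`
applies the expansion. -/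
noncomputable def PsiTerm (f : ℂ → ℂ) (δ : ℂ) (x : ι → ℂ) (y : κ → ℂ) (b : ℂ) (β : π → ℂ)
    (μ : ι → ℕ) : ℂ :=
  ((∏ j, sf f δ (x j + b) (μ j)) * ∏ p, ∏ j, sf f δ (x j + β p) (μ j)) /
    (Dn f δ x μ * ∏ k, ∏ j, sf f δ (x j + y k) (μ j))

/-- The sum `Ψ_N(x; y; b, β)` of `PsiTerm` over all multi-indices of weight `N`. -/
noncomputable def Psi (f : ℂ → ℂ) (δ : ℂ) (x : ι → ℂ) (y : κ → ℂ) (b : ℂ) (β : π → ℂ)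
    (N : ℕ) : ℂ :=
  ∑ μ ∈ piAntidiag univ N, PsiTerm f δ x y b β μ

include hodd hRiem hdiff hf in
/-- Partial fractions with nodes `x_i` and `-w_k`, the terms of the two families on opposite sides. -/
lemma pf_two (x : ι → ℂ) (w : κ → ℂ) (γ : J → ℂ)
    (hc : Fintype.card ι + Fintype.card κ = Fintype.card J)
    (hs : ∑ j, γ j = ∑ k, w k - ∑ i, x i)
    (hx : ∀ i j, i ≠ j → f (x i - x j) ≠ 0) (hw : ∀ i j, i ≠ j → f (w i - w j) ≠ 0)
    (hxw : ∀ i k, f (x i + w k) ≠ 0) :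
    ∑ i, (∏ j, f (x i + γ j)) / (pd f x i * ∏ k, f (x i + w k)) =
      ∑ k, (∏ j, f (w k - γ j)) / (pd f w k * ∏ i, f (w k + x i)) := by
  have h := pf_fintype hodd hRiem hdiff hf (I := ι ⊕ κ) (J := J)
    (Sum.elim x fun k => -w k) (fun j => -γ j) (by simpa using hc)
    (by simp [Fintype.sum_sum_type, hs, sub_eq_add_neg])
    (by rintro (i | i) (j | j) h
        · exact hx i j (fun h' => h (by rw [h']))
        · simpa using hxw i j
        · simp only [Sum.elim_inl, Sum.elim_inr]
          rw [show -w i - x j = -(x j + w i) by ring, hodd]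
          exact neg_ne_zero.mpr (hxw j i)
        · simp only [Sum.elim_inr]
          rw [show -w i - -w j = -(w i - w j) by ring, hodd]
          exact neg_ne_zero.mpr (hw i j (fun h' => h (by rw [h']))))
  simp only [Fintype.sum_sum_type, Fintype.prod_sum_type, Sum.elim_inl, Sum.elim_inr,
    Sum.inl.injEq, Sum.inr.injEq, reduceCtorEq, if_false, sub_neg_eq_add] at h
  rw [← sub_eq_zero, ← h, sub_eq_add_neg, ← sum_neg_distrib]
  congr 1
  refine sum_congr rfl fun k _ => ?_
  have g1 : ∏ j, f (-w k + γ j) = (-1) ^ Fintype.card J * ∏ j, f (w k - γ j) := by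
    rw [← card_univ, ← prod_const, ← prod_mul_distrib]
    refine prod_congr rfl fun b _ => ?_
    rw [neg_one_mul, ← hodd]; congr 1; ring
  have g2 : ∏ i, f (-w k - x i) = (-1) ^ Fintype.card ι * ∏ i, f (w k + x i) := by
    rw [← card_univ, ← prod_const, ← prod_mul_distrib]
    refine prod_congr rfl fun b _ => ?_
    rw [neg_one_mul, ← hodd]; congr 1; ring
  have g3 := pd_neg f hodd w k
  unfold pd at g3
  simp only [sub_neg_eq_add] at g3
  rw [g1, g2, g3, ← hc, pow_add]
  unfold pd
  rw [show ∀ a b p q : ℂ, a * p * (-b * q) = -((a * b) * (q * p)) by intros; ring, div_neg,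
    mul_div_mul_left _ _ (by simp)]

include hodd hRiem hdiff hf

omit [DecidableEq κ] in
/-- Recursion for `Ψ_{N+1}` through the sums `Ψ_N` with one node `x_i` moved to `x_i + δ`. -/
lemma psi_rec (x : ι → ℂ) (y : κ → ℂ) (b : ℂ) (β : π → ℂ) (δ : ℂ) (N : ℕ)
    (hδ : ∀ k : ℤ, k ≠ 0 → f ((k : ℂ) * δ) ≠ 0)
    (hx : ∀ i j, i ≠ j → ∀ l : ℤ, |l| ≤ (N + 1 : ℕ) → f (x i - x j + l * δ) ≠ 0) :
    f ((N + 1) * δ) * Psi f δ x y b β (N + 1) =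
      -∑ i, ((∏ p, f (x i + β p)) * f (x i + b + N * δ)) / (pd f x i * ∏ k, f (x i + y k)) *
        Psi f δ (addAt x δ i) y (b - δ) β N := by
  have hx0 : ∀ i j, i ≠ j → f (x i - x j) ≠ 0 := fun i j h => by
    have := hx i j h 0 (by simp; positivity)
    simpa using this
  unfold Psi
  set h : ι → (ι → ℕ) → ℂ := fun i μ =>
    -((∏ b, f (x i - (x b + μ b * δ))) / pd f x i * f (x i + b + N * δ) *
        ∏ j, (if j = i then sf f δ (x j + b) (μ j - 1) else sf f δ (x j + b - δ) (μ j))) *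
      ((∏ p, ∏ j, sf f δ (x j + β p) (μ j)) /
        (Dn f δ x μ * ∏ k, ∏ j, sf f δ (x j + y k) (μ j))) with hh
  have h0 : ∀ i μ, μ i = 0 → h i μ = 0 := by
    intro i μ h0
    have : ∏ b, f (x i - (x b + μ b * δ)) = 0 :=
      prod_eq_zero (mem_univ i) (by simp [h0, f_zero hodd])
    simp [hh, this]
  have step : ∀ μ ∈ piAntidiag (univ : Finset ι) (N + 1),
      f ((N + 1) * δ) * PsiTerm f δ x y b β μ = ∑ i, h i μ := by
    intro μ hμ
    have := expand_aux hodd hRiem hdiff hf x δ μ N (mem_piAntidiag.mp hμ).1 hx0 b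
    simp only [hh]
    rw [← sum_mul, sum_neg_distrib, ← eq_neg_of_add_eq_zero_left this]
    unfold PsiTerm
    ring
  rw [mul_sum, sum_congr rfl step, sum_antidiag_reindex N h h0]
  simp only [mul_sum]
  rw [sum_comm, ← sum_neg_distrib]
  refine sum_congr rfl fun i _ => ?_
  rw [← sum_neg_distrib]
  refine sum_congr rfl fun ν hν => ?_
  have hνN := (mem_piAntidiag.mp hν).1
  have hQ : ∏ a, f (x i - (x a + bump ν i a * δ)) ≠ 0 := by
    refine prod_ne_zero_iff.mpr fun a _ => ?_
    by_cases ha : a = i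
    · subst ha
      have := hδ (-(bump ν a a : ℤ)) (by rw [bump_same]; push_cast; omega)
      convert this using 2; push_cast; ring
    · have hle : ν a ≤ N := by
        rw [← hνN]; exact single_le_sum (f := ν) (fun _ _ => Nat.zero_le _) (mem_univ a)
      have := hx i a (Ne.symm ha) (-(ν a : ℤ)) (by simp; omega)
      rw [bump_ne _ ha]
      convert this using 2; push_cast; ring
  simp only [hh]
  unfold PsiTerm
  rw [Dn_shift_left]
  simp only [prod_sf_shift_left, prod_mul_distrib]
  have e : ∏ j, (if j = i then sf f δ (x j + b) (bump ν i j - 1) else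
      sf f δ (x j + b - δ) (bump ν i j)) = ∏ j, sf f δ (addAt x δ i j + (b - δ)) (ν j) := by
    refine prod_congr rfl fun j _ => ?_
    split_ifs with hj
    · subst hj; rw [bump_same, addAt_same]; congr 1; ring
    · rw [bump_ne _ hj, addAt_ne _ _ hj]; congr 1; ring
  rw [e]
  have key : ∀ Q P F S B C D A W : ℂ, Q ≠ 0 →
      -(Q / P * F * S) * (B * C / (Q * D * (A * W))) =
      -(B * F / (P * A) * (S * C / (D * W))) := by
    intro Q P F S B C D A W hQ
    rw [div_mul_div_comm]
    have : -(Q / P * F * S) * (B * C / (Q * D * (A * W))) =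
      -((Q / Q) * (B * F * (S * C) * (P⁻¹ * D⁻¹ * A⁻¹ * W⁻¹))) := by
        simp only [div_eq_mul_inv, mul_inv]; ring
    rw [this, div_self hQ]
    simp only [div_eq_mul_inv, mul_inv]; ring
  exact key _ _ _ _ _ _ _ _ _ hQ

omit hodd hRiem hdiff hf [DecidableEq κ] in
lemma prod_sf_addAt (x : ι → ℂ) (y : κ → ℂ) (δ : ℂ) (ν : κ → ℕ) (i : ι) :
    (∏ k, f (x i + y k)) * ∏ j, ∏ k, sf f δ (y k + addAt x δ i j) (ν k) =
      (∏ j, ∏ k, sf f δ (y k + x j) (ν k)) * ∏ k, f (x i + (y k + ν k * δ)) := by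
  rw [← mul_prod_erase univ (fun j => ∏ k, sf f δ (y k + addAt x δ i j) (ν k)) (mem_univ i),
    ← mul_prod_erase univ (fun j => ∏ k, sf f δ (y k + x j) (ν k)) (mem_univ i)]
  have e : ∏ j ∈ univ.erase i, ∏ k, sf f δ (y k + addAt x δ i j) (ν k) =
      ∏ j ∈ univ.erase i, ∏ k, sf f δ (y k + x j) (ν k) :=
    prod_congr rfl fun j hj => by rw [addAt_ne _ _ (ne_of_mem_erase hj)]
  rw [e, addAt_same, ← mul_assoc, ← prod_mul_distrib, mul_right_comm, ← prod_mul_distrib]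
  congr 1
  refine prod_congr rfl fun k _ => ?_
  have := sf_shift f δ (y k + x i) (ν k)
  rw [show x i + y k = y k + x i by ring, show y k + (x i + δ) = y k + x i + δ by ring, this]
  congr 2; ring

/-- The duality `Ψ_N(x; y; b, β) = Ψ_N(y; x; -b, -β)`. Neither side distinguishes `b` from the `β_p`,
but the recursion does. -/
lemma psi_dual (δ : ℂ) (hδ : ∀ k : ℤ, k ≠ 0 → f ((k : ℂ) * δ) ≠ 0)
    (hc : Fintype.card ι + Fintype.card κ = Fintype.card π + 1) (N : ℕ) :
    ∀ (x : ι → ℂ) (y : κ → ℂ) (b : ℂ) (β : π → ℂ),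
    b + ∑ p, β p = ∑ k, y k - ∑ i, x i →
    (∀ i j, i ≠ j → ∀ l : ℤ, |l| ≤ N → f (x i - x j + l * δ) ≠ 0) →
    (∀ i j, i ≠ j → ∀ l : ℤ, |l| ≤ N → f (y i - y j + l * δ) ≠ 0) →
    (∀ i k, ∀ l : ℕ, l < N → f (x i + y k + l * δ) ≠ 0) →
    Psi f δ x y b β N = Psi f δ y x (-b) (fun p => -β p) N := by
  induction N with
  | zero =>
    intro x y b β _ _ _ _
    simp [Psi, PsiTerm, Dn, sf_zero]
  | succ N ih =>
    intro x y b β hbal hx hy hxy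
    have hN0 : f ((N + 1) * δ) ≠ 0 := by
      have := hδ (N + 1) (by omega)
      simpa using this
    apply mul_left_cancel₀ hN0
    have hx0 : ∀ i j, i ≠ j → f (x i - x j) ≠ 0 := fun i j h => by
      have := hx i j h 0 (by simp; positivity)
      simpa using this
    rw [psi_rec hodd hRiem hdiff hf x y b β δ N hδ hx]
    have hIH : ∀ i, Psi f δ (addAt x δ i) y (b - δ) β N =
        Psi f δ y (addAt x δ i) (-(b - δ)) (fun p => -β p) N := by
      intro i
      apply ih
      · rw [sum_addAt]; linear_combination hbal
      · intro j k hjk l hl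
        have hl' := abs_le.mp hl
        by_cases hj : j = i
        · subst hj
          rw [addAt_same, addAt_ne _ _ (Ne.symm hjk)]
          have := hx j k hjk (l + 1) (by rw [abs_le]; push_cast; constructor <;> omega)
          convert this using 2; push_cast; ring
        · by_cases hk : k = i
          · subst hk
            rw [addAt_same, addAt_ne _ _ hjk]
            have := hx j k hjk (l - 1) (by rw [abs_le]; push_cast; constructor <;> omega)
            convert this using 2; push_cast; ring
          · rw [addAt_ne _ _ hj, addAt_ne _ _ hk]
            exact hx j k hjk l (by rw [abs_le]; push_cast; constructor <;> omega)
      · intro j k hjk l hl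
        exact hy j k hjk l (hl.trans (by push_cast; omega))
      · intro j k l hl
        by_cases hj : j = i
        · subst hj
          rw [addAt_same]
          convert hxy j k (l + 1) (by omega) using 2; push_cast; ring
        · rw [addAt_ne _ _ hj]
          exact hxy j k l (by omega)
    simp only [hIH]
    set h : κ → (κ → ℕ) → ℂ := fun k ν =>
      ((∏ a, f (y k + ν k * δ - y a)) / pd f (fun a => y a + ν a * δ) k *
        f (y k + ν k * δ + -b - (N + 1) * δ) *
        ∏ l, (if l = k then sf f δ (y l + -b + δ) (ν l - 1) else sf f δ (y l + -b + δ) (ν l))) *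
      ((∏ p, ∏ j, sf f δ (y j + -β p) (ν j)) /
        (Dn f δ y ν * ∏ k, ∏ j, sf f δ (y j + x k) (ν j))) with hh
    have h0 : ∀ i μ, μ i = 0 → h i μ = 0 := by
      intro i μ h0
      have : ∏ a, f (y i + μ i * δ - y a) = 0 :=
        prod_eq_zero (mem_univ i) (by simp [h0, f_zero hodd])
      simp [hh, this]
    have hyν : ∀ ν : κ → ℕ, ∑ i, ν i ≤ N + 1 → ∀ i j, i ≠ j →
        f (y i + ν i * δ - (y j + ν j * δ)) ≠ 0 := by
      intro ν hν i j hij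
      have h1 : ν i ≤ ∑ i, ν i := single_le_sum (f := ν) (fun _ _ => Nat.zero_le _) (mem_univ i)
      have h2 : ν j ≤ ∑ i, ν i := single_le_sum (f := ν) (fun _ _ => Nat.zero_le _) (mem_univ j)
      have := hy i j hij (ν i - ν j) (by rw [abs_le]; push_cast; constructor <;> omega)
      convert this using 2; push_cast; ring
    -- on the dual side, `[(N+1)δ]` times a summand is a sum over the entry of `μ` to be lowered
    have step : ∀ μ ∈ piAntidiag (univ : Finset κ) (N + 1),
        f ((N + 1) * δ) * PsiTerm f δ y x (-b) (fun p => -β p) μ = ∑ i, h i μ := by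
      intro μ hμ
      have hμN := (mem_piAntidiag.mp hμ).1
      have := collect_aux hodd hRiem hdiff hf y δ μ N hμN (hyν μ hμN.le) (-b)
      simp only [hh]
      rw [← sum_mul, this]
      unfold PsiTerm
      ring
    unfold Psi
    rw [mul_sum _ _ (f ((N + 1) * δ)), sum_congr rfl step, sum_antidiag_reindex N h h0]
    simp only [mul_sum]
    rw [sum_comm, ← sum_neg_distrib]
    refine sum_congr rfl fun ν hν => ?_
    have hνN : ∑ k, ν k = N := (mem_piAntidiag.mp hν).1
    have hνc : ∑ k, (ν k : ℂ) = N := by rw [← hνN]; push_cast; rfl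
    set w : κ → ℂ := fun k => y k + ν k * δ with hw
    -- for fixed `ν` it remains to convert a sum over the nodes `x_i` into one over `y_k + ν_k δ`
    have pf := pf_two hodd hRiem hdiff hf x w
      (fun o : Option π => o.elim (b + N * δ) β) (by simp [hc])
      (by simp only [Fintype.sum_option, Option.elim, hw, sum_add_distrib, ← sum_mul, hνc]
          linear_combination hbal)
      hx0 (hyν ν (by omega))
      (fun i k => by
        have hle : ν k ≤ N := by
          rw [← hνN]; exact single_le_sum (f := ν) (fun _ _ => Nat.zero_le _) (mem_univ k)
        convert hxy i k (ν k) (by omega) using 2; simp only [hw]; ring)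
    simp only [Fintype.prod_option, Option.elim] at pf
    set G : ℂ := ((∏ j, sf f δ (y j + -(b - δ)) (ν j)) * ∏ p, ∏ j, sf f δ (y j + -β p) (ν j)) /
      (Dn f δ y ν * ∏ j, ∏ k, sf f δ (y k + x j) (ν k)) with hG
    have L : ∀ i, ((∏ p, f (x i + β p)) * f (x i + b + N * δ)) / (pd f x i * ∏ k, f (x i + y k)) *
        PsiTerm f δ y (addAt x δ i) (-(b - δ)) (fun p => -β p) ν =
        G * ((f (x i + (b + N * δ)) * ∏ p, f (x i + β p)) / (pd f x i * ∏ k, f (x i + w k))) := by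
      intro i
      unfold PsiTerm
      rw [hG, div_mul_div_comm, div_mul_div_comm]
      have := prod_sf_addAt (f := f) x y δ ν i
      congr 1
      · rw [← add_assoc]; ring
      · simp only [hw]; linear_combination this * (Dn f δ y ν * pd f x i)
    have R : ∀ k, h k (bump ν k) =
        -(G * ((f (w k - (b + N * δ)) * ∏ p, f (w k - β p)) / (pd f w k * ∏ i, f (w k + x i)))) := by
      intro k
      simp only [hh]
      have hP : pd f (fun a => y a + bump ν k a * δ) k ≠ 0 :=
        pd_ne f (hyν _ (by rw [sum_bump]; omega)) k
      have hA : ∏ a, f (y k + bump ν k k * δ - y a) ≠ 0 := by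
        refine prod_ne_zero_iff.mpr fun a _ => ?_
        have hle : ν k ≤ N := by
          rw [← hνN]; exact single_le_sum (f := ν) (fun _ _ => Nat.zero_le _) (mem_univ k)
        by_cases ha : a = k
        · subst ha
          have := hδ (bump ν a a : ℤ) (by rw [bump_same]; push_cast; omega)
          convert this using 2; push_cast; ring
        · have := hy k a (Ne.symm ha) (bump ν k k : ℤ) (by rw [bump_same, abs_le]; push_cast; constructor <;> omega)
          convert this using 2; push_cast; ring
      have hD := Dn_shift_right f δ hodd y ν k
      have e : ∏ l, (if l = k then sf f δ (y l + -b + δ) (bump ν k l - 1) else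
          sf f δ (y l + -b + δ) (bump ν k l)) = ∏ j, sf f δ (y j + -(b - δ)) (ν j) := by
        refine prod_congr rfl fun j _ => ?_
        split_ifs with hj
        · subst hj; rw [bump_same]; congr 1; ring
        · rw [bump_ne _ hj]; congr 1; ring
      rw [e]
      simp only [prod_sf_shift_right, prod_mul_distrib]
      have e2 : f (y k + bump ν k k * δ + -b - (N + 1) * δ) = f (w k - (b + N * δ)) := by
        rw [bump_same]; simp only [hw]; congr 1; push_cast; ring
      have e3 : ∏ p, f (y k + -β p + ν k * δ) = ∏ p, f (w k - β p) :=
        prod_congr rfl fun p _ => by simp only [hw]; congr 1; ring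
      have e4 : ∏ i, f (y k + x i + ν k * δ) = ∏ i, f (w k + x i) :=
        prod_congr rfl fun p _ => by simp only [hw]; congr 1; ring
      rw [e2, e3, e4, hG]
      have key : ∀ A P F S B C D D' P' X Y : ℂ, A ≠ 0 → P ≠ 0 → D * P = -(D' * P' * A) →
          A / P * F * S * (B * C / (D * (X * Y))) =
          -(S * C / (D' * Y) * (F * B / (P' * X))) := by
        intro A P F S B C D D' P' X Y hA hP hD
        have : A / P * F * S * (B * C / (D * (X * Y))) = A * (F * S * B * C) / ((D * P) * (X * Y)) := by
          simp only [div_eq_mul_inv, mul_inv]; ring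
        rw [this, hD, show -(D' * P' * A) * (X * Y) = A * (-(D' * P' * (X * Y))) by ring,
          mul_div_mul_left _ _ hA, div_neg, div_mul_div_comm]
        congr 2 <;> ring
      exact key _ _ _ _ _ _ _ _ _ _ _ hA hP hD
    simp only [L, R, ← mul_sum, sum_neg_distrib]
    rw [pf]
end

/-! ### Rearranging shifted factorials -/

section
variable {f : ℂ → ℂ} (hodd : ∀ t : ℂ, f (-t) = -f t) (δ : ℂ)
include hodd

omit hodd in
lemma prod_pairs {m : ℕ} (g : Fin m → Fin m → ℂ) :
    ∏ i, ∏ j, g i j = (∏ i, g i i) * ∏ i, ∏ j ∈ univ.filter (fun j => i < j), (g i j * g j i) := by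
  have h := Finset.prod_prod_Ioi_mul_eq_prod_prod_off_diag (fun i j => g j i)
  have e : ∀ i : Fin m, univ.filter (fun j => i < j) = Ioi i := fun i => by ext; simp
  simp only [e]
  rw [h, ← prod_mul_distrib]
  refine prod_congr rfl fun i _ => ?_
  rw [← mul_prod_erase univ _ (mem_univ i)]
  congr 1
  refine prod_congr ?_ fun _ _ => rfl
  ext; simp

/-- The contribution of a pair of nodes with difference `w` to `bridge`. -/
lemma pair_aux (w : ℂ) (p q : ℕ) :
    f (w + (p - q) * δ) * (sf f δ (-w - p * δ) q * sf f δ (w - q * δ) p) =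
      f w * (sf f δ (w + δ) p * sf f δ (-w + δ) q) := by
  have h1 : sf f δ (-w - p * δ) q = (-1) ^ q * sf f δ (w + (p - q) * δ + δ) q :=
    sf_refl δ hodd (by ring)
  have h2 : sf f δ (-w + δ) q = (-1) ^ q * sf f δ (w - q * δ) q := sf_refl δ hodd (by ring)
  have h3 := sf_add f δ (w - q * δ) p (q + 1)
  have h4 := sf_add f δ (w - q * δ) q (p + 1)
  rw [sf_succ'] at h3 h4
  rw [show w - q * δ + p * δ = w + (p - q) * δ by ring] at h3
  rw [show w - q * δ + q * δ = w by ring] at h4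
  rw [show q + (p + 1) = p + (q + 1) by ring] at h4
  rw [h1, h2]
  linear_combination (-1) ^ q * (h4 - h3)

/-- Comparison of the denominator `Dn` with the factors `Δ(x + μδ) / Δ(x)` and
`∏_{i, j} [x_i - x_j + δ]_{μ_i}` of the multiple series. -/
lemma bridge {m : ℕ} (x : Fin m → ℂ) (μ : Fin m → ℕ) :
    Del f (fun i => x i + (μ i : ℂ) * δ) * Dn f δ x μ =
      (-1) ^ (∑ i, μ i) * (Del f x * ∏ j, ∏ i, sf f δ (x i - x j + δ) (μ i)) := by
  unfold Del Dn
  rw [prod_pairs, prod_pairs (fun j i => sf f δ (x i - x j + δ) (μ i))]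
  have e1 : ∏ i, sf f δ (x i + -(x i + μ i * δ)) (μ i) =
      (-1) ^ (∑ i, μ i) * ∏ i, sf f δ (x i - x i + δ) (μ i) := by
    rw [← prod_pow_eq_pow_sum, ← prod_mul_distrib]
    exact prod_congr rfl fun i _ => sf_refl δ hodd (by ring)
  rw [e1, mul_left_comm, mul_assoc, mul_left_comm (∏ i, ∏ j ∈ _, f (x i - x j))]
  congr 2
  simp only [← prod_mul_distrib]
  refine prod_congr rfl fun i _ => prod_congr rfl fun j _ => ?_
  have := pair_aux hodd δ (x i - x j) (μ i) (μ j)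
  rw [show x i + μ i * δ - (x j + μ j * δ) = x i - x j + (μ i - μ j) * δ by ring,
    show x j + -(x i + μ i * δ) = -(x i - x j) - μ i * δ by ring,
    show x i + -(x j + μ j * δ) = x i - x j - μ j * δ by ring,
    show x j - x i + δ = -(x i - x j) + δ by ring]
  linear_combination this

/-- Reversal of a shifted factorial, expressed through the complementary length `M = N - n`. -/
lemma sf_rev {z w : ℂ} {M n N : ℕ} (hN : M + n = N) (hzw : z + w + N * δ = δ)
    (h0 : sf f δ w M ≠ 0) :
    sf f δ z n = (-1) ^ n * (sf f δ w N / sf f δ w M) := by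
  subst hN
  rw [sf_add, mul_div_cancel_left₀ _ h0]
  exact sf_refl δ hodd (by push_cast at hzw; linear_combination hzw)

omit hodd in
/-- The identity that produces the very well-poised factors of the multiple series: both sides equal
`[z]_{N + p + 1}`. -/
lemma vwp_aux (z : ℂ) {M n p N : ℕ} (hN : M + n = N) :
    f z * (sf f δ (δ + z) N * sf f δ (z + δ + N * δ) p) =
      sf f δ z M * sf f δ (z + M * δ) p * f (z + (M + p : ℕ) * δ) *
        sf f δ (z + δ + (M + p : ℕ) * δ) n := by
  subst hN
  rw [← sf_add f δ z M p, ← sf_succ f δ z (M + p),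
    show z + δ + (M + p : ℕ) * δ = z + (M + p + 1 : ℕ) * δ by push_cast; ring,
    ← sf_add, show M + p + 1 + n = (M + n + p) + 1 by ring, sf_succ', add_comm δ z, sf_add f δ (z + δ) (M + n) p]

end

/-! ### The summand of the multiple series -/

section
variable {f : ℂ → ℂ} (hodd : ∀ t : ℂ, f (-t) = -f t) (δ : ℂ)

/-- The nodes `x_1, …, x_m` together with the extra node `-s - Nδ`, which is indexed by `none`. -/
noncomputable def nodeX {m : ℕ} (δ : ℂ) (x : Fin m → ℂ) (s : ℂ) (N : ℕ) : Option (Fin m) → ℂ :=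
  fun o => o.elim (-s - N * δ) x

/-- The numerator parameters `c_1, c_2` and `a_j - x_j`. -/
noncomputable def zeroB {m : ℕ} (a x : Fin m → ℂ) (c1 c2 : ℂ) : Option (Option (Fin m)) → ℂ :=
  fun o => o.elim c1 fun o => o.elim c2 fun j => a j - x j

/-- The nodes `δ + s - d_0` and `δ + s - d_1`. -/
noncomputable def nodeY (δ s d0 d1 : ℂ) : Fin 2 → ℂ := ![δ + s - d0, δ + s - d1]

lemma neg_one_pow_inv (n : ℕ) : ((-1 : ℂ) ^ n)⁻¹ = (-1) ^ n := by
  rw [← inv_pow]; norm_num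

lemma neg_one_pow_sq (n : ℕ) : (-1 : ℂ) ^ n * (-1) ^ n = 1 := by
  rw [← mul_pow]; norm_num

lemma inv_aux {F A B S C G E : ℂ} (hF : F ≠ 0) (hA : A ≠ 0) (hB : B ≠ 0) (hC : C ≠ 0)
    (hE : E ≠ 0) (h : F * (A * B) = S * C * G * E) :
    (E * C)⁻¹ = G / F * S * B⁻¹ * A⁻¹ := by
  field_simp
  linear_combination h

include hodd

/-- The factor of `Dn` that the extra node `-s - Nδ` contributes on the diagonal. It is the source of the
terminating factor `[d_2]_{|μ|}`. -/
lemma sf_diag {M n N : ℕ} (hμ : M + n = N) {d2 : ℂ} (hd2 : d2 = -(N : ℂ) * δ)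
    (hδ : ∀ k : ℤ, k ≠ 0 → f ((k : ℂ) * δ) ≠ 0) :
    sf f δ (-(n * δ)) n = (-1) ^ n * (-1) ^ M * (sf f δ δ N / sf f δ d2 M) := by
  have e1 : sf f δ (-(n * δ)) n = (-1) ^ n * sf f δ δ n := sf_refl δ hodd (by ring)
  have e2 : sf f δ d2 M = (-1) ^ M * sf f δ (δ + n * δ) M :=
    sf_refl δ hodd (by rw [hd2, ← hμ]; push_cast; ring)
  have e3 : sf f δ δ N = sf f δ δ n * sf f δ (δ + n * δ) M := by
    rw [← hμ, add_comm, sf_add]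
  have hne : sf f δ (δ + n * δ) M ≠ 0 := sf_ne f δ le_rfl fun l _ => by
    convert hδ (n + l + 1) (by omega) using 2; push_cast; ring
  rw [e1, e2, e3, mul_div_mul_comm, div_self hne, mul_one, div_eq_mul_inv, neg_one_pow_inv]
  linear_combination -(-1) ^ n * sf f δ δ n * neg_one_pow_sq M

/-- The summand of `Ψ_N` for the nodes `nodeX`, at a multi-index with entries `μ` and `n = N - |μ|`, is
a multiple, independent of `μ`, of the summand of `E^{m,3}`. -/
lemma left_term {m N n : ℕ} (a x : Fin m → ℂ) (s c0 c1 c2 d0 d1 d2 : ℂ)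
    (hd2 : d2 = -(N : ℂ) * δ) (hδ : ∀ k : ℤ, k ≠ 0 → f ((k : ℂ) * δ) ≠ 0)
    (μ : Fin m → ℕ) (hμ : ∑ i, μ i + n = N)
    (hL1 : ∀ i j, i ≠ j → f (x i - x j) ≠ 0)
    (hL2 : ∀ i, f (x i + s) ≠ 0)
    (hL3 : ∀ (j : Fin m) (l : ℕ), l < N → f (δ + s + x j - a j + (l : ℂ) * δ) ≠ 0)
    (hL4 : ∀ (i j : Fin m) (l : ℕ), l < N → f (x i - x j + δ + (l : ℂ) * δ) ≠ 0)
    (hL5 : ∀ (k : Fin 3) (l : ℕ), l < N → f (δ + s - ![c0, c1, c2] k + (l : ℂ) * δ) ≠ 0)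
    (hL6 : ∀ (i : Fin m) (k : Fin 3) (l : ℕ), l < N →
      f (x i + δ + s - ![d0, d1, d2] k + (l : ℂ) * δ) ≠ 0)
    (hd0 : ∀ l : ℕ, l < N → f (d0 + l * δ) ≠ 0)
    (hd1 : ∀ l : ℕ, l < N → f (d1 + l * δ) ≠ 0)
    (hsx : ∀ (i : Fin m) (l : ℕ), l < N → f (δ + s + x i + l * δ) ≠ 0) :
    PsiTerm f δ (nodeX δ x s N) (nodeY δ s d0 d1) c0 (zeroB a x c1 c2)
      (fun o => o.elim n μ) =
    (sf f δ (δ + s - c0) N * sf f δ (δ + s - c1) N * sf f δ (δ + s - c2) N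
      / (sf f δ δ N * sf f δ d0 N * sf f δ d1 N)
      * ∏ j, (sf f δ (δ + s + x j - a j) N / sf f δ (δ + s + x j) N)) *
    Eterm f δ a x s ![c0, c1, c2] ![d0, d1, d2] μ := by
  set M := ∑ i, μ i with hM
  have hMN : M ≤ N := by omega
  have hle : ∀ i, μ i ≤ N := fun i =>
    (single_le_sum (f := μ) (fun _ _ => Nat.zero_le _) (mem_univ i)).trans hMN
  -- `P`, `Q`, `Z` reverse the factors at the extra node `-s - Nδ`: those of the numerator parameters,
  -- those of the nodes `nodeY`, and the diagonal factor of `Dn`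
  have P : ∀ c : ℂ, (∀ l : ℕ, l < N → f (δ + s - c + (l : ℂ) * δ) ≠ 0) →
      sf f δ (-s - N * δ + c) n = (-1) ^ n * (sf f δ (δ + s - c) N / sf f δ (δ + s - c) M) :=
    fun c hc => sf_rev hodd δ hμ (by ring) (sf_ne f δ hMN hc)
  have Q : ∀ d : ℂ, (∀ l : ℕ, l < N → f (d + (l : ℂ) * δ) ≠ 0) →
      sf f δ (-s - N * δ + (δ + s - d)) n = (-1) ^ n * (sf f δ d N / sf f δ d M) :=
    fun d hd => sf_rev hodd δ hμ (by ring) (sf_ne f δ hMN hd)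
  have Z : sf f δ (-(n * δ)) n = (-1) ^ n * (-1) ^ M * (sf f δ δ N / sf f δ d2 M) :=
    sf_diag hodd δ hμ hd2 hδ
  have hDel : Del f x ≠ 0 := by
    refine prod_ne_zero_iff.mpr fun i _ => prod_ne_zero_iff.mpr fun j hj => ?_
    exact hL1 i j (by simp at hj; exact hj.ne)
  have hB0 : ∏ j, ∏ i, sf f δ (x i - x j + δ) (μ i) ≠ 0 :=
    prod_ne_zero_iff.mpr fun j _ => prod_ne_zero_iff.mpr fun i _ => sf_ne f δ (hle i) (hL4 i j)
  have B := bridge hodd δ x μ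
  have hDn : Dn f δ x μ ≠ 0 := by
    intro h
    rw [h, mul_zero] at B
    exact (mul_ne_zero (by simp) (mul_ne_zero hDel hB0)) B.symm
  have B' : (Dn f δ x μ)⁻¹ = (-1) ^ M * (Del f (fun i => x i + (μ i : ℂ) * δ) / Del f x) *
      (∏ j, ∏ i, sf f δ (x i - x j + δ) (μ i))⁻¹ := by
    rw [← hM] at B
    field_simp
    linear_combination -(-1) ^ M * B - (∏ j, ∏ i, sf f δ (x i - x j + δ) (μ i)) * Del f x * neg_one_pow_sq M
  -- the factors of `Dn` that couple the extra node with `x j`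
  have V : ∀ j, (sf f δ (-s - N * δ + -(x j + μ j * δ)) n * sf f δ (x j + -(-s - N * δ + n * δ)) (μ j))⁻¹ =
      (-1) ^ n * (f (x j + s + ((M + μ j : ℕ) : ℂ) * δ) / f (x j + s) * sf f δ (s + x j) M *
        (sf f δ (x j + δ + s - d2) (μ j))⁻¹ * (sf f δ (δ + s + x j) N)⁻¹) := by
    intro j
    have e1 : sf f δ (-s - N * δ + -(x j + μ j * δ)) n =
        (-1) ^ n * sf f δ (x j + s + δ + (M + μ j : ℕ) * δ) n :=
      sf_refl δ hodd (by rw [← hμ]; push_cast; ring)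
    have e2 := vwp_aux (f := f) δ (x j + s) (p := μ j) hμ
    rw [e1, show x j + -(-s - N * δ + n * δ) = x j + s + M * δ by rw [← hμ]; push_cast; ring]
    rw [show δ + (x j + s) = δ + s + x j by ring,
      show x j + s + δ + N * δ = x j + δ + s - d2 by rw [hd2]; ring] at e2
    rw [show s + x j = x j + s by ring]
    have h1 : sf f δ (x j + δ + s - d2) (μ j) ≠ 0 := sf_ne f δ (hle j) (hL6 j 2)
    have h2 : sf f δ (δ + s + x j) N ≠ 0 := sf_ne f δ le_rfl (hsx j)
    have h3 := hL2 j
    have h4 := mul_ne_zero h3 (mul_ne_zero h2 h1)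
    rw [e2] at h4
    have h5 := right_ne_zero_of_mul h4
    have h6 := right_ne_zero_of_mul (left_ne_zero_of_mul (left_ne_zero_of_mul h4))
    rw [mul_assoc, mul_inv, neg_one_pow_inv]
    congr 1
    exact inv_aux h3 h2 h1 h6 h5 e2
  have W : ∀ j, sf f δ (-s - N * δ + (a j - x j)) n *
      (sf f δ (-s - N * δ + -(x j + μ j * δ)) n *
        sf f δ (x j + -(-s - N * δ + n * δ)) (μ j))⁻¹ =
      (sf f δ (δ + s + x j - a j) N / sf f δ (δ + s + x j) N) *
        (f (x j + s + ((M + μ j : ℕ) : ℂ) * δ) / f (x j + s) * sf f δ (s + x j) M *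
        (sf f δ (x j + δ + s - d2) (μ j))⁻¹ * (sf f δ (δ + s + x j - a j) M)⁻¹) := by
    intro j
    have := P (a j - x j) (fun l hl => by
      convert hL3 j l hl using 2; ring)
    rw [V, this, show δ + s - (a j - x j) = δ + s + x j - a j by ring]
    linear_combination (sf f δ (δ + s + x j - a j) N / sf f δ (δ + s + x j) N) *
        (f (x j + s + ((M + μ j : ℕ) : ℂ) * δ) / f (x j + s) * sf f δ (s + x j) M *
        (sf f δ (x j + δ + s - d2) (μ j))⁻¹ * (sf f δ (δ + s + x j - a j) M)⁻¹) *
          neg_one_pow_sq n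
  have HW := prod_congr rfl (fun j (_ : j ∈ univ) => W j)
  rw [prod_mul_distrib, prod_inv_distrib] at HW
  have HD : Dn f δ (nodeX δ x s N) (fun o => o.elim n μ) =
      sf f δ (-(n * δ)) n * (∏ j, (sf f δ (-s - N * δ + -(x j + μ j * δ)) n *
        sf f δ (x j + -(-s - N * δ + n * δ)) (μ j))) * Dn f δ x μ := by
    unfold Dn
    simp only [Fintype.prod_option, nodeX, Option.elim, prod_mul_distrib]
    rw [show -s - N * δ + -(-s - N * δ + n * δ) = -(n * δ) by ring]
    ring
  have hc0 := hL5 0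
  have hc1 := hL5 1
  have hc2 := hL5 2
  simp only [Matrix.cons_val] at hc0 hc1 hc2
  unfold PsiTerm
  rw [HD]
  simp only [Fintype.prod_option, nodeX, zeroB, nodeY, Option.elim, Fin.prod_univ_two,
    Matrix.cons_val_zero, Matrix.cons_val_one]
  rw [prod_mul_distrib (f := fun j => sf f δ (-s - N * δ + (a j - x j)) n)]
  have key : ∀ A0 B0 A1 B1 A2 B2 R U z D E q0 r0 q1 r1 : ℂ,
      A0 * B0 * (A1 * B1 * (A2 * B2 * (R * U))) / (z * D * E * ((q0 * r0) * (q1 * r1))) =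
      A0 * B0 * (A1 * B1) * (A2 * B2) * (R * D⁻¹) * U * z⁻¹ * E⁻¹ * (q0 * r0)⁻¹ * (q1 * r1)⁻¹ := by
    intros
    simp only [div_eq_mul_inv, mul_inv]; ring
  rw [key, HW, B', Z, P c0 hc0, P c1 hc1, P c2 hc2, Q d0 hd0, Q d1 hd1]
  unfold Eterm
  simp only [show ∀ i j, x i + (a j - x j) = x i - x j + a j from fun i j => by ring,
    show ∀ i d, x i + (δ + s - d) = x i + δ + s - d from fun i d => by ring]
  simp only [Fin.prod_univ_three, Matrix.cons_val, div_eq_mul_inv, mul_inv, inv_inv,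
    prod_mul_distrib, prod_inv_distrib, neg_one_pow_inv, ← hM]
  have hs1 := neg_one_pow_sq n
  have hs2 := neg_one_pow_sq M
  generalize (-1 : ℂ) ^ n = ε at *
  generalize (-1 : ℂ) ^ M = σ at *
  have h6 : ε ^ 6 * σ ^ 2 = 1 := by
    rw [show ε ^ 6 * σ ^ 2 = (ε * ε) ^ 3 * (σ * σ) by ring, hs1, hs2]; norm_num
  refine Eq.trans ?_ (one_mul _)
  rw [← h6]
  ring
end

/-! ### The summand of the one-dimensional series -/

section
variable {f : ℂ → ℂ} (hodd : ∀ t : ℂ, f (-t) = -f t) (δ : ℂ)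
include hodd

/-- Reversal of a shifted factorial, in the variant that keeps the base `z` at full length `N`. -/
lemma sf_rev' {z w : ℂ} {k n N : ℕ} (hN : k + n = N) (hzw : z + w + N * δ = δ)
    (h0 : sf f δ w k ≠ 0) :
    sf f δ z n = sf f δ z N * (-1) ^ k / sf f δ w k := by
  subst hN
  have e : sf f δ w k = (-1) ^ k * sf f δ (z + n * δ) k :=
    sf_refl δ hodd (by push_cast at hzw; linear_combination hzw)
  rw [eq_div_iff h0, e, add_comm k n, sf_add]
  ring

/-- The identity that produces the very well-poised factor `[t + 2kδ] / [t]` of the one-dimensional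
series, with `w = d_0 - d_1` and `t = -w - Nδ`. -/
lemma vwp_right (w : ℂ) {k n N : ℕ} (hN : k + n = N) :
    sf f δ (-w - N * δ + k * δ) k * sf f δ (w - k * δ) n * f (-w - N * δ + 2 * k * δ) *
        sf f δ (-w - N * δ) k =
      (-1) ^ k * (f (-w - N * δ) * sf f δ (δ - w) k * sf f δ w N) := by
  have e1 : sf f δ (-w - N * δ + k * δ) k = (-1) ^ k * sf f δ (w + (n - k) * δ + δ) k :=
    sf_refl δ hodd (by rw [← hN]; push_cast; ring)
  have e2 : sf f δ (-w - N * δ) k = (-1) ^ k * sf f δ (w + (n - k) * δ + δ + k * δ) k :=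
    sf_refl δ hodd (by rw [← hN]; push_cast; ring)
  have e3 : sf f δ (δ - w) k = (-1) ^ k * sf f δ (w - k * δ) k := sf_refl δ hodd (by ring)
  have e4 : f (-w - N * δ + 2 * k * δ) = -f (w + (n - k) * δ) := by
    rw [← hodd, ← hN]; congr 1; push_cast; ring
  have e5 : f (-w - N * δ) = -f (w + N * δ) := by
    rw [← hodd]; congr 1; ring
  have h1 := sf_add f δ (w - k * δ) k (N + 1)
  rw [show w - k * δ + k * δ = w by ring, sf_succ] at h1
  have h2 := sf_add f δ (w - k * δ) n (k + k + 1)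
  rw [show w - k * δ + n * δ = w + (n - k) * δ by ring, sf_succ',
    sf_add f δ (w + (n - k) * δ + δ) k k,
    show n + (k + k + 1) = k + (N + 1) by omega] at h2
  rw [e1, e2, e3, e4, e5]
  linear_combination (neg_one_pow_sq k) * (sf f δ (w - k * δ) k * f (w + N * δ) * sf f δ w N
    - sf f δ (w + (n - k) * δ + δ) k * sf f δ (w - k * δ) n * f (w + (n - k) * δ) *
      sf f δ (w + (n - k) * δ + δ + k * δ) k) - h1 + h2

/-- The summand of the dual sum at the multi-index `(k, N - k)` is a multiple, independent of `k`, of the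
summand of the one-dimensional series. -/
lemma right_term {m N n k : ℕ} (a x : Fin m → ℂ) (s c0 c1 c2 d0 d1 d2 : ℂ)
    (hd2 : d2 = -(N : ℂ) * δ) (hδ : ∀ k : ℤ, k ≠ 0 → f ((k : ℂ) * δ) ≠ 0)
    (hk : k + n = N)
    (t : ℂ) (ht : t = d1 + d2 - d0)
    (e0 e1 e2 : ℂ) (he0 : e0 = δ + s - d0 - c0) (he1 : e1 = δ + s - d0 - c1)
    (he2 : e2 = δ + s - d0 - c2)
    (uu vv : Fin m → ℂ) (huu : ∀ i, uu i = δ + s - d0 + x i - a i)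
    (hvv : ∀ i, vv i = d1 + d2 - s - x i)
    (U : Fin (m + m + 1 + 1 + 1 + 1 + 1) → ℂ)
    (hU : U = Fin.cons d1 (Fin.cons d2 (Fin.cons e0 (Fin.cons e1
      (Fin.cons e2 (Fin.append uu vv))))))
    (hRt : f t ≠ 0)
    (hR : ∀ (i : Fin (m + m + 1 + 1 + 1 + 1 + 1)) (l : ℕ), l < N →
      f (δ + t - U i + (l : ℂ) * δ) ≠ 0)
    (hd01 : ∀ l : ℕ, l < N → f (d0 - d1 + (l : ℂ) * δ) ≠ 0)
    (hd1 : ∀ l : ℕ, l < N → f (d1 + l * δ) ≠ 0)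
    (hxd : ∀ (i : Fin m) (l : ℕ), l < N → f (δ + s + x i - d1 + l * δ) ≠ 0) :
    PsiTerm f δ (nodeY δ s d0 d1) (nodeX δ x s N) (-c0) (fun p => -zeroB a x c1 c2 p)
      ![k, n] =
    (sf f δ (δ + s - c0 - d1) N * sf f δ (δ + s - c1 - d1) N * sf f δ (δ + s - c2 - d1) N
      / (sf f δ δ N * sf f δ (d0 - d1) N * sf f δ d1 N)
      * ∏ j, (sf f δ (δ + s + x j - a j - d1) N / sf f δ (δ + s + x j - d1) N)) *
    ((f (t + 2 * (k : ℂ) * δ) / f t) * (sf f δ t k / sf f δ δ k)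
    * ∏ i, sf f δ (U i) k / sf f δ (δ + t - U i) k) := by
  have hkN : k ≤ N := by omega
  have hR' : ∀ i, sf f δ (δ + t - U i) k ≠ 0 := fun i => sf_ne f δ hkN (hR i)
  have hR0 : sf f δ (δ + t - d1) k ≠ 0 := by simpa [hU] using hR' 0
  have hR1 : sf f δ (δ + t - d2) k ≠ 0 := by simpa [hU] using hR' 1
  have hR2 : sf f δ (δ + t - e0) k ≠ 0 := by
    simpa only [hU, Fin.cons_succ, Fin.cons_zero] using hR' (Fin.succ (Fin.succ 0))
  have hR3 : sf f δ (δ + t - e1) k ≠ 0 := by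
    simpa only [hU, Fin.cons_succ, Fin.cons_zero] using hR' (Fin.succ (Fin.succ (Fin.succ 0)))
  have hR4 : sf f δ (δ + t - e2) k ≠ 0 := by
    simpa only [hU, Fin.cons_succ, Fin.cons_zero] using
      hR' (Fin.succ (Fin.succ (Fin.succ (Fin.succ 0))))
  have hRu : ∀ i, sf f δ (δ + t - uu i) k ≠ 0 := fun i => by
    simpa only [hU, Fin.cons_succ, Fin.append_left] using
      hR' (Fin.succ (Fin.succ (Fin.succ (Fin.succ (Fin.succ (Fin.castAdd m i))))))
  have hprod : ∏ i, sf f δ (U i) k / sf f δ (δ + t - U i) k =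
      (sf f δ d1 k / sf f δ (δ + t - d1) k) * (sf f δ d2 k / sf f δ (δ + t - d2) k) *
      (sf f δ e0 k / sf f δ (δ + t - e0) k) * (sf f δ e1 k / sf f δ (δ + t - e1) k) *
      (sf f δ e2 k / sf f δ (δ + t - e2) k) *
      ∏ i, ((sf f δ (uu i) k / sf f δ (δ + t - uu i) k) *
        (sf f δ (vv i) k / sf f δ (δ + t - vv i) k)) := by
    rw [hU]
    simp only [Fin.prod_univ_succ, Fin.cons_zero, Fin.cons_succ]
    rw [Fin.prod_univ_add, prod_mul_distrib]
    simp only [Fin.append_left, Fin.append_right]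
    ring
  have P : ∀ C e : ℂ, e = δ + s - d0 - C → sf f δ (δ + t - e) k ≠ 0 →
      sf f δ (δ + s - d0 + -C) k * sf f δ (δ + s - d1 + -C) n =
        (-1) ^ k * sf f δ (δ + s - C - d1) N * (sf f δ e k / sf f δ (δ + t - e) k) := by
    intro C e he hne
    rw [sf_rev' hodd δ (w := δ + t - e) hk (by rw [he, ht, hd2]; ring) hne,
      show δ + s - d1 + -C = δ + s - C - d1 by ring, show δ + s - d0 + -C = e by rw [he]; ring]
    ring
  have hv : ∀ i, sf f δ (vv i) k ≠ 0 := by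
    intro i
    rw [sf_refl δ hodd (y := δ + s + x i - d1 + n * δ)
      (by rw [hvv, hd2, ← hk]; push_cast; ring)]
    refine mul_ne_zero (by simp) (sf_ne f δ le_rfl fun l hl => ?_)
    convert hxd i (n + l) (by omega) using 2
    push_cast; ring
  have W : ∀ i, (sf f δ (δ + s - d0 + -(a i - x i)) k * sf f δ (δ + s - d1 + -(a i - x i)) n) *
      (sf f δ (δ + s - d0 + x i) k * sf f δ (δ + s - d1 + x i) n)⁻¹ =
      (sf f δ (δ + s + x i - a i - d1) N / sf f δ (δ + s + x i - d1) N) *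
      ((sf f δ (uu i) k / sf f δ (δ + t - uu i) k) *
        (sf f δ (vv i) k / sf f δ (δ + t - vv i) k)) := by
    intro i
    rw [P (a i - x i) (uu i) (by rw [huu]; ring) (hRu i),
      sf_rev' hodd δ (z := δ + s - d1 + x i) (w := vv i) hk (by rw [hvv, hd2]; ring) (hv i),
      show δ + s - (a i - x i) - d1 = δ + s + x i - a i - d1 by ring,
      show δ + s - d1 + x i = δ + s + x i - d1 by ring,
      show δ + s - d0 + x i = δ + t - vv i by rw [hvv, ht]; ring]
    simp only [div_eq_mul_inv, mul_inv, inv_inv, neg_one_pow_inv]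
    linear_combination (sf f δ (δ + s + x i - a i - d1) N * (sf f δ (δ + s + x i - d1) N)⁻¹) *
      ((sf f δ (uu i) k * (sf f δ (δ + t - uu i) k)⁻¹) *
        (sf f δ (vv i) k * (sf f δ (δ + t - vv i) k)⁻¹)) * neg_one_pow_sq k
  have HW := prod_congr rfl (fun j (_ : j ∈ univ) => W j)
  rw [prod_mul_distrib, prod_inv_distrib, prod_mul_distrib (s := univ)
    (f := fun i => sf f δ (δ + s + x i - a i - d1) N / sf f δ (δ + s + x i - d1) N)] at HW
  have Q : (sf f δ (δ + s - d0 + (-s - N * δ)) k * sf f δ (δ + s - d1 + (-s - N * δ)) n)⁻¹ =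
      (-1) ^ n * (sf f δ d1 N)⁻¹ * (sf f δ d1 k / sf f δ (δ + t - d1) k) := by
    rw [sf_rev hodd δ (z := δ + s - d1 + (-s - N * δ)) (w := d1) hk (by ring)
      (sf_ne f δ hkN hd1), show δ + s - d0 + (-s - N * δ) = δ + t - d1 by rw [ht, hd2]; ring]
    simp only [div_eq_mul_inv, mul_inv, inv_inv, neg_one_pow_inv]
    ring
  have Z1 : sf f δ (-(k * δ)) k = (-1) ^ k * sf f δ δ k := sf_refl δ hodd (by ring)
  have Z2 : sf f δ (-(n * δ)) n = (-1) ^ n * (-1) ^ k * (sf f δ δ N / sf f δ d2 k) :=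
    sf_diag hodd δ hk hd2 hδ
  have T : (sf f δ (t + k * δ) k * sf f δ (d0 - d1 - k * δ) n)⁻¹ =
      (-1) ^ k * (f (t + 2 * k * δ) / f t * sf f δ t k * (sf f δ (δ + t - d2) k)⁻¹ *
        (sf f δ (d0 - d1) N)⁻¹) := by
    have h := vwp_right hodd δ (d0 - d1) hk
    rw [show -(d0 - d1) - N * δ = t by rw [ht, hd2]; ring,
      show δ - (d0 - d1) = δ + t - d2 by rw [ht]; ring] at h
    have hA := sf_ne f δ le_rfl hd01
    have := neg_one_pow_sq k
    apply inv_eq_of_mul_eq_one_right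
    have e : ∀ a b G S F A B ε : ℂ, F ≠ 0 → A ≠ 0 → B ≠ 0 → ε * ε = 1 →
        a * b * G * S = ε * (F * A * B) → a * b * (ε * (G / F * S * A⁻¹ * B⁻¹)) = 1 := by
      intro a b G S F A B ε hF hA hB hε h
      field_simp
      linear_combination ε * h + F * A * B * hε
    exact e _ _ _ _ _ _ _ _ hRt hR1 hA this h
  have HD : Dn f δ (nodeY δ s d0 d1) ![k, n] =
      sf f δ (-(k * δ)) k * sf f δ (-(n * δ)) n *
        (sf f δ (t + k * δ) k * sf f δ (d0 - d1 - k * δ) n) := by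
    unfold Dn
    simp only [Fin.prod_univ_two, nodeY, Matrix.cons_val_zero, Matrix.cons_val_one]
    rw [show δ + s - d0 + -(δ + s - d0 + k * δ) = -(k * δ) by ring,
      show δ + s - d1 + -(δ + s - d1 + n * δ) = -(n * δ) by ring,
      show δ + s - d0 + -(δ + s - d1 + n * δ) = t + k * δ by
        rw [ht, hd2, ← hk]; push_cast; ring,
      show δ + s - d1 + -(δ + s - d0 + k * δ) = d0 - d1 - k * δ by ring]
    ring
  unfold PsiTerm
  rw [HD, hprod]
  simp only [Fintype.prod_option, nodeX, zeroB, nodeY, Option.elim, Fin.prod_univ_two,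
    Matrix.cons_val_zero, Matrix.cons_val_one]
  rw [P c0 e0 he0 hR2, P c1 e1 he1 hR3, P c2 e2 he2 hR4]
  have key : ∀ A0 A1 A2 R z1 z2 D q E : ℂ,
      A0 * (A1 * (A2 * R)) / (z1 * z2 * D * (q * E)) =
      A0 * A1 * A2 * (R * E⁻¹) * z1⁻¹ * z2⁻¹ * D⁻¹ * q⁻¹ := by
    intros
    simp only [div_eq_mul_inv, mul_inv]; ring
  rw [key, HW, T, Q, Z1, Z2]
  simp only [div_eq_mul_inv, mul_inv, inv_inv, neg_one_pow_inv]
  have hs1 := neg_one_pow_sq n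
  have hs2 := neg_one_pow_sq k
  generalize (-1 : ℂ) ^ n = ε at *
  generalize (-1 : ℂ) ^ k = σ at *
  have h6 : ε ^ 2 * σ ^ 6 = 1 := by
    rw [show ε ^ 2 * σ ^ 6 = (σ * σ) ^ 3 * (ε * ε) by ring, hs1, hs2]; norm_num
  refine Eq.trans ?_ (one_mul _)
  rw [← h6]
  ring
end

/-! ### The transformation under additional genericity -/

section
variable {f : ℂ → ℂ} (hodd : ∀ t : ℂ, f (-t) = -f t)

/-- The prefactor of the transformation. -/
noncomputable def pref (f : ℂ → ℂ) (δ : ℂ) {m : ℕ} (N : ℕ) (a x : Fin m → ℂ)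
    (s c0 c1 c2 d0 d1 : ℂ) : ℂ :=
  (sf f δ d0 N * sf f δ (δ + s - c0 - d1) N * sf f δ (δ + s - c1 - d1) N
      * sf f δ (δ + s - c2 - d1) N)
    / (sf f δ (d0 - d1) N * sf f δ (δ + s - c0) N * sf f δ (δ + s - c1) N
      * sf f δ (δ + s - c2) N)
    * (∏ i, sf f δ (δ + s + x i) N * sf f δ (δ + s + x i - a i - d1) N
        / (sf f δ (δ + s + x i - a i) N * sf f δ (δ + s + x i - d1) N))

/-- The `k`-th summand of the series `E1`. -/
noncomputable def E1term (f : ℂ → ℂ) (δ : ℂ) {r : ℕ} (s : ℂ) (u : Fin r → ℂ) (k : ℕ) : ℂ :=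
  (f (s + 2 * (k : ℂ) * δ) / f s) * (sf f δ s k / sf f δ δ k)
    * ∏ i, sf f δ (u i) k / sf f δ (δ + s - u i) k

include hodd in
lemma sf_terminate (δ d2 : ℂ) {N k : ℕ} (hd2 : d2 = -(N : ℂ) * δ) (hk : N < k) :
    sf f δ d2 k = 0 :=
  prod_eq_zero (mem_range.mpr hk) (by rw [hd2]; simp [f_zero hodd])

include hodd in
lemma E1_finite (δ d2 t : ℂ) {N r : ℕ} (hd2 : d2 = -(N : ℂ) * δ) (U : Fin r → ℂ) (i : Fin r)
    (hi : U i = d2) : E1 f δ t U = ∑ k ∈ range (N + 1), E1term f δ t U k := by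
  unfold E1
  refine tsum_eq_sum fun k hk => ?_
  have hk' : N < k := by simpa using hk
  rw [prod_eq_zero (mem_univ i) (by rw [hi, sf_terminate hodd δ d2 hd2 hk', zero_div]), mul_zero]

include hodd in
/-- Because of the factor `[-Nδ]_{|μ|}` only `|μ| ≤ N` contributes. These `μ` are parametrized by the
multi-indices of weight `N` with one additional entry `N - |μ|`, indexed by `none`. -/
lemma Evw_finite (δ s c0 c1 c2 d0 d1 d2 : ℂ) {m N : ℕ} (hd2 : d2 = -(N : ℂ) * δ)
    (a x : Fin m → ℂ) :
    Evw f δ a x s ![c0, c1, c2] ![d0, d1, d2] =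
      ∑ μ ∈ piAntidiag (univ : Finset (Option (Fin m))) N,
        Eterm f δ a x s ![c0, c1, c2] ![d0, d1, d2] (fun i => μ (some i)) := by
  classical
  rw [← sum_image (s := piAntidiag (univ : Finset (Option (Fin m))) N)
    (g := fun μ i => μ (some i))]
  · unfold Evw
    refine tsum_eq_sum fun μ hμ => ?_
    have hN : N < ∑ i, μ i := by
      by_contra! h
      apply hμ
      refine mem_image.mpr ⟨fun o => o.elim (N - ∑ i, μ i) μ, ?_, rfl⟩
      simp only [mem_piAntidiag, Fintype.sum_option, Option.elim, mem_univ, implies_true, and_true]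
      omega
    unfold Eterm
    rw [Fin.prod_univ_three (M := ℂ)]
    simp [sf_terminate hodd δ d2 hd2 hN]
  · intro μ hμ ν hν h
    have hμ' := (mem_piAntidiag.mp hμ).1
    have hν' := (mem_piAntidiag.mp hν).1
    have h' : ∀ i, μ (some i) = ν (some i) := fun i => congrFun h i
    rw [Fintype.sum_option] at hμ' hν'
    have hs : ∑ i, μ (some i) = ∑ i, ν (some i) := sum_congr rfl fun i _ => h' i
    ext (_ | i)
    · omega
    · exact h' i

lemma sum_piAntidiag_two (N : ℕ) (g : (Fin 2 → ℕ) → ℂ) :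
    ∑ ν ∈ piAntidiag univ N, g ν = ∑ k ∈ range (N + 1), g ![k, N - k] := by
  refine sum_bij' (fun ν _ => ν 0) (fun k _ => ![k, N - k]) ?_ ?_ ?_ ?_ ?_
  · intro ν hν
    have := (mem_piAntidiag.mp hν).1
    rw [Fin.sum_univ_two] at this
    simp; omega
  · intro k hk
    have := mem_range.mp hk
    simp [mem_piAntidiag, Fin.sum_univ_two]; omega
  · intro ν hν
    have := (mem_piAntidiag.mp hν).1
    rw [Fin.sum_univ_two] at this
    ext i; fin_cases i <;> simp; omega
  · intro k hk; simp
  · intro ν hν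
    have := (mem_piAntidiag.mp hν).1
    rw [Fin.sum_univ_two] at this
    congr 1
    ext i; fin_cases i <;> simp; omega

/-- The transformation, for the terminating sums, under the additional assumption that `[d_1]_N` and
`[δ + s + x_i]_N` are nonzero (`hd1`, `hsx`). -/
lemma generic_identity
    (hodd : ∀ t : ℂ, f (-t) = -f t) (hdiff : Differentiable ℂ f) (hf : ∃ z, f z ≠ 0)
    (hRiem : ∀ x y u v : ℂ,
      f (x + y) * f (x - y) * f (u + v) * f (u - v) =
        f (x + u) * f (x - u) * f (y + v) * f (y - v)
          - f (x + v) * f (x - v) * f (y + u) * f (y - u))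
    (δ : ℂ) (hδ : ∀ k : ℤ, k ≠ 0 → f ((k : ℂ) * δ) ≠ 0)
    (m N : ℕ) (a x : Fin m → ℂ) (s c0 c1 c2 d0 d1 d2 : ℂ)
    (hd2 : d2 = -(N : ℂ) * δ)
    (hbal : (∑ i, a i) + (c0 + c1 + c2 + d0 + d1 + d2) = 2 * δ + 3 * s)
    (t : ℂ) (ht : t = d1 + d2 - d0)
    (e0 e1 e2 : ℂ) (he0 : e0 = δ + s - d0 - c0) (he1 : e1 = δ + s - d0 - c1)
    (he2 : e2 = δ + s - d0 - c2)
    (uu vv : Fin m → ℂ) (huu : ∀ i, uu i = δ + s - d0 + x i - a i)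
    (hvv : ∀ i, vv i = d1 + d2 - s - x i)
    (U : Fin (m + m + 1 + 1 + 1 + 1 + 1) → ℂ)
    (hU : U = Fin.cons d1 (Fin.cons d2 (Fin.cons e0 (Fin.cons e1
      (Fin.cons e2 (Fin.append uu vv))))))
    (hL1 : ∀ i j, i ≠ j → f (x i - x j) ≠ 0)
    (hL2 : ∀ i, f (x i + s) ≠ 0)
    (hL3 : ∀ (j : Fin m) (l : ℕ), l < N → f (δ + s + x j - a j + (l : ℂ) * δ) ≠ 0)
    (hL4 : ∀ (i j : Fin m) (l : ℕ), l < N → f (x i - x j + δ + (l : ℂ) * δ) ≠ 0)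
    (hL5 : ∀ (k : Fin 3) (l : ℕ), l < N → f (δ + s - ![c0, c1, c2] k + (l : ℂ) * δ) ≠ 0)
    (hL6 : ∀ (i : Fin m) (k : Fin 3) (l : ℕ), l < N →
      f (x i + δ + s - ![d0, d1, d2] k + (l : ℂ) * δ) ≠ 0)
    (hRt : f t ≠ 0)
    (hR : ∀ (i : Fin (m + m + 1 + 1 + 1 + 1 + 1)) (l : ℕ), l < N →
      f (δ + t - U i + (l : ℂ) * δ) ≠ 0)
    (hd01 : ∀ l : ℕ, l < N → f (d0 - d1 + (l : ℂ) * δ) ≠ 0)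
    (hd1 : ∀ l : ℕ, l < N → f (d1 + l * δ) ≠ 0)
    (hsx : ∀ (i : Fin m) (l : ℕ), l < N → f (δ + s + x i + l * δ) ≠ 0) :
    ∑ μ ∈ piAntidiag (univ : Finset (Option (Fin m))) N,
        Eterm f δ a x s ![c0, c1, c2] ![d0, d1, d2] (fun i => μ (some i)) =
      pref f δ N a x s c0 c1 c2 d0 d1 * ∑ k ∈ range (N + 1), E1term f δ t U k := by
  have fneg : ∀ {z w : ℂ}, f z ≠ 0 → w = -z → f w ≠ 0 := by
    intro z w hz hw
    rw [hw, hodd]; exact neg_ne_zero.mpr hz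
  have hd0 : ∀ l : ℕ, l < N → f (d0 + l * δ) ≠ 0 := fun l hl => by
    have h := hR 0 (N - 1 - l) (by omega)
    simp only [hU, Fin.cons_zero] at h
    refine fneg h ?_
    rw [ht, hd2, show N - 1 - l = N - (l + 1) by omega, Nat.cast_sub (by omega)]
    push_cast; ring
  have hR1 : ∀ l : ℕ, l < N → f (δ + d1 - d0 + l * δ) ≠ 0 := fun l hl => by
    have h := hR 1 l hl
    rw [show (1 : Fin (m + m + 1 + 1 + 1 + 1 + 1)) = Fin.succ 0 from rfl] at h
    simp only [hU, Fin.cons_succ, Fin.cons_zero] at h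
    convert h using 2; rw [ht]; ring
  have hxs : ∀ i (l : ℕ), l ≤ 2 * N → f (x i + s + l * δ) ≠ 0 := by
    intro i l hl
    rcases Nat.eq_zero_or_pos l with rfl | hpos
    · simpa using hL2 i
    · obtain ⟨l, rfl⟩ : ∃ l', l = l' + 1 := ⟨l - 1, by omega⟩
      by_cases h : l < N
      · convert hsx i l h using 2; push_cast; ring
      · have := hL6 i 2 (l - N) (by omega)
        simp only [Matrix.cons_val] at this
        convert this using 2
        rw [hd2, Nat.cast_sub (by omega)]; push_cast; ring
  have hxd : ∀ (i : Fin m) (l : ℕ), l < N → f (δ + s + x i - d1 + l * δ) ≠ 0 := by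
    intro i l hl
    have := hL6 i 1 l hl
    simp only [Matrix.cons_val] at this
    convert this using 2; ring
  have hxx : ∀ i j, i ≠ j → ∀ l : ℤ, |l| ≤ N → f (x i - x j + l * δ) ≠ 0 := by
    intro i j hij l hl
    rw [abs_le] at hl
    rcases lt_trichotomy l 0 with h | h | h
    · obtain ⟨n, hn⟩ : ∃ n : ℕ, l = -(n + 1) := ⟨(-l - 1).toNat, by omega⟩
      subst hn
      refine fneg (hL4 j i n (by omega)) ?_
      push_cast; ring
    · subst h; simpa using hL1 i j hij
    · obtain ⟨n, hn⟩ : ∃ n : ℕ, l = n + 1 := ⟨(l - 1).toNat, by omega⟩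
      subst hn
      convert hL4 i j n (by omega) using 2
      push_cast; ring
  have hyy : ∀ l : ℤ, |l| ≤ N → f (d0 - d1 + l * δ) ≠ 0 := by
    intro l hl
    rw [abs_le] at hl
    rcases lt_or_ge l 0 with h | h
    · obtain ⟨n, hn⟩ : ∃ n : ℕ, l = -(n + 1) := ⟨(-l - 1).toNat, by omega⟩
      subst hn
      refine fneg (hR1 n (by omega)) ?_
      push_cast; ring
    · obtain ⟨n, hn⟩ : ∃ n : ℕ, l = n := ⟨l.toNat, by omega⟩
      subst hn
      by_cases h : n < N
      · exact_mod_cast hd01 n h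
      · have : n = N := by omega
        subst this
        refine fneg hRt ?_
        rw [ht, hd2]; push_cast; ring
  have hrev : ∀ d : ℂ, (∀ l : ℕ, l < N → f (d + l * δ) ≠ 0) → ∀ l : ℕ, l < N →
      f (-s - N * δ + (δ + s - d) + l * δ) ≠ 0 := by
    intro d hd l hl
    refine fneg (hd (N - 1 - l) (by omega)) ?_
    rw [show N - 1 - l = N - (l + 1) by omega, Nat.cast_sub (by omega)]
    push_cast; ring
  have D := psi_dual hodd hRiem hdiff hf (ι := Option (Fin m)) (κ := Fin 2)
    (π := Option (Option (Fin m))) δ hδ (by simp) N (nodeX δ x s N) (nodeY δ s d0 d1) c0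
    (zeroB a x c1 c2)
    (by
      simp only [Fintype.sum_option, nodeX, zeroB, nodeY, Option.elim, Fin.sum_univ_two,
        Matrix.cons_val_zero, Matrix.cons_val_one, sum_sub_distrib]
      rw [hd2] at hbal
      linear_combination hbal)
    (by
      rintro (_ | i) (_ | j) hij l hl
      · exact absurd rfl hij
      · simp only [nodeX, Option.elim]
        rw [abs_le] at hl
        refine fneg (hxs j (N - l).toNat (by omega)) ?_
        have : (((N - l).toNat : ℤ) : ℂ) = N - l := by
          rw [Int.toNat_of_nonneg (by omega)]; push_cast; ring
        push_cast at this
        rw [this]; ring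
      · simp only [nodeX, Option.elim]
        rw [abs_le] at hl
        convert hxs i (N + l).toNat (by omega) using 2
        have : (((N + l).toNat : ℤ) : ℂ) = N + l := by
          rw [Int.toNat_of_nonneg (by omega)]; push_cast; ring
        push_cast at this
        rw [this]; ring
      · exact hxx i j (fun h => hij (by rw [h])) l hl)
    (by
      intro i j hij l hl
      fin_cases i <;> fin_cases j
      · exact absurd rfl hij
      · refine fneg (hyy (-l) (by rwa [abs_neg])) ?_
        simp [nodeY]; ring
      · convert hyy l hl using 2
        simp [nodeY]
      · exact absurd rfl hij)
    (by
      rintro (_ | i) k l hl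
      · fin_cases k
        · exact hrev d0 hd0 l hl
        · exact hrev d1 hd1 l hl
      · fin_cases k
        · have := hL6 i 0 l hl
          simp only [Matrix.cons_val] at this
          convert this using 2; simp [nodeX, nodeY]; ring
        · have := hL6 i 1 l hl
          simp only [Matrix.cons_val] at this
          convert this using 2; simp [nodeX, nodeY]; ring)
  unfold Psi at D
  rw [sum_piAntidiag_two] at D
  have HL : ∀ μ ∈ piAntidiag (univ : Finset (Option (Fin m))) N, _ = _ := fun μ hμ =>
    left_term hodd δ (n := μ none) a x s c0 c1 c2 d0 d1 d2 hd2 hδ (fun i => μ (some i))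
      (by have := (mem_piAntidiag.mp hμ).1
          rw [Fintype.sum_option] at this; omega)
      hL1 hL2 hL3 hL4 hL5 hL6 hd0 hd1 hsx
  have eL : ∀ μ : Option (Fin m) → ℕ, (fun o : Option (Fin m) => o.elim (μ none) fun i => μ (some i)) = μ :=
    fun μ => by ext (_ | i) <;> rfl
  simp only [eL] at HL
  have HR : ∀ k ∈ range (N + 1), _ = _ := fun k hk =>
    right_term hodd δ (k := k) (n := N - k) a x s c0 c1 c2 d0 d1 d2 hd2 hδ
      (by have := mem_range.mp hk; omega) t ht e0 e1 e2 he0 he1 he2 uu vv huu hvv U hU hRt hR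
      hd01 hd1 hxd
  rw [sum_congr rfl HL, sum_congr rfl HR, ← mul_sum, ← mul_sum] at D
  have hc : ∀ k : Fin 3, sf f δ (δ + s - ![c0, c1, c2] k) N ≠ 0 := fun k => sf_ne f δ le_rfl (hL5 k)
  have hc0 := hc 0
  have hc1 := hc 1
  have hc2 := hc 2
  simp only [Matrix.cons_val] at hc0 hc1 hc2
  have hδN : sf f δ δ N ≠ 0 := sf_ne f δ le_rfl fun l _ => by
    convert hδ (l + 1) (by omega) using 2; push_cast; ring
  have hd0N := sf_ne f δ (le_refl N) hd0
  have hd1N := sf_ne f δ (le_refl N) hd1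
  have hX : ∀ j, sf f δ (δ + s + x j - a j) N ≠ 0 := fun j => sf_ne f δ le_rfl (hL3 j)
  have hY : ∀ j, sf f δ (δ + s + x j) N ≠ 0 := fun j => sf_ne f δ le_rfl (hsx j)
  have hX' := prod_ne_zero_iff.mpr fun j (_ : j ∈ univ) => hX j
  have hY' := prod_ne_zero_iff.mpr fun j (_ : j ∈ univ) => hY j
  change _ = _ * ∑ k ∈ range (N + 1), E1term f δ t U k at D
  rw [prod_div_distrib, prod_div_distrib] at D
  unfold pref
  rw [prod_div_distrib, prod_mul_distrib, prod_mul_distrib]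
  have key : ∀ A0 A1 A2 z q0 q1 X Y S B0 B1 B2 w X' Y' R : ℂ, A0 ≠ 0 → A1 ≠ 0 → A2 ≠ 0 → z ≠ 0 →
      q0 ≠ 0 → q1 ≠ 0 → X ≠ 0 → Y ≠ 0 →
      A0 * A1 * A2 / (z * q0 * q1) * (X / Y) * S = B0 * B1 * B2 / (z * w * q1) * (X' / Y') * R →
      S = (q0 * B0 * B1 * B2) / (w * A0 * A1 * A2) * ((Y * X') / (X * Y')) * R := by
    intro A0 A1 A2 z q0 q1 X Y S B0 B1 B2 w X' Y' R h1 h2 h3 h4 h5 h6 h7 h8 h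
    have h' : S = (z * q0 * q1 / (A0 * A1 * A2) * (Y / X)) *
        (A0 * A1 * A2 / (z * q0 * q1) * (X / Y) * S) := by field_simp
    rw [h', h]
    have : (z / z) * (q1 / q1) = 1 := by rw [div_self h4, div_self h6, one_mul]
    refine Eq.trans ?_ (one_mul _)
    rw [← this]
    simp only [div_eq_mul_inv, mul_inv]
    ring
  exact key _ _ _ _ _ _ _ _ _ _ _ _ _ _ _ _ hc0 hc1 hc2 hδN hd0N hd1N hX' hY' D
end

/-! ### Removal of the additional genericity -/

section
open Filter Topology

variable {f : ℂ → ℂ}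

lemma sf_continuousAt (hdiff : Differentiable ℂ f) (δ : ℂ) {g : ℂ → ℂ} {z₀ : ℂ}
    (hg : ContinuousAt g z₀) (n : ℕ) : ContinuousAt (fun z => sf f δ (g z) n) z₀ :=
  ContinuousAt.comp' (g := fun z => sf f δ z n)
    (sf_differentiable hdiff n).continuous.continuousAt hg

lemma Eterm_continuousAt (hdiff : Differentiable ℂ f) (δ : ℂ) {m n N : ℕ} (a x : Fin m → ℂ)
    (s : ℂ → ℂ) (u v : ℂ → Fin n → ℂ) (z₀ : ℂ) (hs : ContinuousAt s z₀)
    (hu : ∀ k, ContinuousAt (fun z => u z k) z₀) (hv : ∀ k, ContinuousAt (fun z => v z k) z₀)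
    (hL2 : ∀ i, f (x i + s z₀) ≠ 0)
    (hL3 : ∀ (j : Fin m) (l : ℕ), l < N → f (δ + s z₀ + x j - a j + (l : ℂ) * δ) ≠ 0)
    (hL5 : ∀ (k : Fin n) (l : ℕ), l < N → f (δ + s z₀ - u z₀ k + (l : ℂ) * δ) ≠ 0)
    (hL6 : ∀ (i : Fin m) (k : Fin n) (l : ℕ), l < N →
      f (x i + δ + s z₀ - v z₀ k + (l : ℂ) * δ) ≠ 0)
    (μ : Fin m → ℕ) (hμ : ∑ i, μ i ≤ N) :
    ContinuousAt (fun z => Eterm f δ a x (s z) (u z) (v z) μ) z₀ := by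
  have hc := hdiff.continuous
  have hμi : ∀ i, μ i ≤ N := fun i =>
    (single_le_sum (f := μ) (fun _ _ => Nat.zero_le _) (mem_univ i)).trans hμ
  unfold Eterm
  refine ((continuousAt_const.mul ?_).mul ?_).mul ?_
  · refine tendsto_finsetProd _ fun i _ => ContinuousAt.div ?_ ?_ (hL2 i)
    · exact ContinuousAt.comp' hc.continuousAt (by fun_prop)
    · exact ContinuousAt.comp' hc.continuousAt (by fun_prop)
  · refine tendsto_finsetProd _ fun j _ => (ContinuousAt.div ?_ ?_ ?_).mul continuousAt_const
    · exact sf_continuousAt hdiff δ (by fun_prop) _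
    · exact sf_continuousAt hdiff δ (by fun_prop) _
    · exact sf_ne f δ hμ (hL3 j)
  · refine tendsto_finsetProd _ fun k _ => (ContinuousAt.div ?_ ?_ ?_).mul
      (tendsto_finsetProd _ fun i _ => ContinuousAt.div ?_ ?_ ?_)
    · exact sf_continuousAt hdiff δ (hv k) _
    · exact sf_continuousAt hdiff δ ((continuousAt_const.add hs).sub (hu k)) _
    · exact sf_ne f δ hμ (hL5 k)
    · exact sf_continuousAt hdiff δ (continuousAt_const.add (hu k)) _
    · exact sf_continuousAt hdiff δ ((continuousAt_const.add hs).sub (hv k)) _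
    · exact sf_ne f δ (hμi i) (hL6 i k)

lemma E1term_continuousAt (hdiff : Differentiable ℂ f) (δ : ℂ) {r N : ℕ}
    (t : ℂ → ℂ) (U : ℂ → Fin r → ℂ) (z₀ : ℂ) (ht : ContinuousAt t z₀)
    (hU : ∀ i, ContinuousAt (fun z => U z i) z₀)
    (hRt : f (t z₀) ≠ 0)
    (hR : ∀ (i : Fin r) (l : ℕ), l < N → f (δ + t z₀ - U z₀ i + (l : ℂ) * δ) ≠ 0)
    (k : ℕ) (hk : k ≤ N) :
    ContinuousAt (fun z => E1term f δ (t z) (U z) k) z₀ := by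
  have hc := hdiff.continuous
  unfold E1term
  have h1 : ContinuousAt (fun z => f (t z + 2 * (k : ℂ) * δ) / f (t z)) z₀ :=
    ContinuousAt.div (ContinuousAt.comp' hc.continuousAt (by fun_prop))
      (ContinuousAt.comp' hc.continuousAt ht) hRt
  have h2 : ContinuousAt (fun z => sf f δ (t z) k / sf f δ δ k) z₀ :=
    (sf_continuousAt hdiff δ ht k).div_const _
  refine (h1.mul h2).mul (tendsto_finsetProd _ fun i _ => ContinuousAt.div ?_ ?_ ?_)
  · exact sf_continuousAt hdiff δ (hU i) _
  · exact sf_continuousAt hdiff δ ((continuousAt_const.add ht).sub (hU i)) _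
  · exact sf_ne f δ hk (hR i)

lemma pref_continuousAt (hdiff : Differentiable ℂ f) (δ : ℂ) {m N : ℕ} (a x : Fin m → ℂ)
    (s c0 d1 : ℂ → ℂ) (c1 c2 d0 : ℂ) (z₀ : ℂ) (hs : ContinuousAt s z₀)
    (hc0 : ContinuousAt c0 z₀) (hd1 : ContinuousAt d1 z₀)
    (hL3 : ∀ (j : Fin m) (l : ℕ), l < N → f (δ + s z₀ + x j - a j + (l : ℂ) * δ) ≠ 0)
    (hL5 : ∀ (k : Fin 3) (l : ℕ), l < N → f (δ + s z₀ - ![c0 z₀, c1, c2] k + (l : ℂ) * δ) ≠ 0)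
    (hxd : ∀ (i : Fin m) (l : ℕ), l < N → f (δ + s z₀ + x i - d1 z₀ + (l : ℂ) * δ) ≠ 0)
    (hd01 : ∀ l : ℕ, l < N → f (d0 - d1 z₀ + (l : ℂ) * δ) ≠ 0) :
    ContinuousAt (fun z => pref f δ N a x (s z) (c0 z) c1 c2 d0 (d1 z)) z₀ := by
  unfold pref
  have h : ∀ {g : ℂ → ℂ}, ContinuousAt g z₀ → ContinuousAt (fun z => sf f δ (g z) N) z₀ :=
    fun hg => sf_continuousAt hdiff δ hg N
  refine (ContinuousAt.div ?_ ?_ ?_).mul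
    (tendsto_finsetProd _ fun i _ => ContinuousAt.div ?_ ?_ ?_)
  · exact ((continuousAt_const.mul (h (by fun_prop))).mul (h (by fun_prop))).mul
      (h (by fun_prop))
  · exact (((h (by fun_prop)).mul (h (by fun_prop))).mul (h (by fun_prop))).mul
      (h (by fun_prop))
  · exact mul_ne_zero (mul_ne_zero (mul_ne_zero (sf_ne f δ le_rfl hd01)
      (sf_ne f δ le_rfl (hL5 0))) (sf_ne f δ le_rfl (hL5 1))) (sf_ne f δ le_rfl (hL5 2))
  · exact (h (by fun_prop)).mul (h (by fun_prop))
  · exact (h (by fun_prop)).mul (h (by fun_prop))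
  · exact mul_ne_zero (sf_ne f δ le_rfl (hL3 i)) (sf_ne f δ le_rfl (hxd i))

/-- The zeros of `f` are isolated. -/
lemma eventually_shift_ne (hdiff : Differentiable ℂ f) (hf : ∃ z, f z ≠ 0) (w : ℂ) :
    ∀ᶠ z in 𝓝[≠] (0 : ℂ), f (w + z) ≠ 0 := by
  set g : ℂ → ℂ := fun z => f (w + z) with hg
  have hgd : Differentiable ℂ g := by fun_prop
  have hga : AnalyticOnNhd ℂ g Set.univ := fun z _ => hgd.analyticAt z
  rcases (hgd.analyticAt 0).eventually_eq_zero_or_eventually_ne_zero with h | h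
  · obtain ⟨z, hz⟩ := hf
    have := hga.eqOn_zero_of_preconnected_of_eventuallyEq_zero isPreconnected_univ
      (Set.mem_univ 0) h (Set.mem_univ (z - w))
    simp only [hg, Pi.zero_apply, add_sub_cancel] at this
    exact absurd this hz
  · exact h

lemma eventually_forall_lt {F : Filter ℂ} {P : ℂ → ℕ → Prop} {N : ℕ}
    (h : ∀ l < N, ∀ᶠ z in F, P z l) : ∀ᶠ z in F, ∀ l < N, P z l :=
  (eventually_all_finite (Set.finite_lt_nat N)).mpr h

/-- Nonvanishing of finitely many brackets persists when their argument moves slightly, at rate `r`. -/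
lemma eventually_ne_lt (hdiff : Differentiable ℂ f) (δ : ℂ) {N : ℕ} (A r : ℂ)
    (h : ∀ l : ℕ, l < N → f (A + l * δ) ≠ 0) :
    ∀ᶠ z in 𝓝[≠] (0 : ℂ), ∀ l : ℕ, l < N → f (A + r * z + l * δ) ≠ 0 := by
  refine eventually_forall_lt fun l hl => eventually_nhdsWithin_of_eventually_nhds ?_
  have hc : Continuous fun z : ℂ => f (A + r * z + l * δ) :=
    hdiff.continuous.comp (by fun_prop)
  exact hc.continuousAt.eventually_ne (by simpa using h l hl)

/-- The transformation for the terminating sums. The parameters are moved along a line on which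
`generic_identity` holds away from `z = 0`; both sides are continuous at `z = 0`. -/
lemma finite_identity
    (hodd : ∀ t : ℂ, f (-t) = -f t) (hdiff : Differentiable ℂ f) (hf : ∃ z, f z ≠ 0)
    (hRiem : ∀ x y u v : ℂ,
      f (x + y) * f (x - y) * f (u + v) * f (u - v) =
        f (x + u) * f (x - u) * f (y + v) * f (y - v)
          - f (x + v) * f (x - v) * f (y + u) * f (y - u))
    (δ : ℂ) (hδ : ∀ k : ℤ, k ≠ 0 → f ((k : ℂ) * δ) ≠ 0)
    (m N : ℕ) (a x : Fin m → ℂ) (s c0 c1 c2 d0 d1 d2 : ℂ)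
    (hd2 : d2 = -(N : ℂ) * δ)
    (hbal : (∑ i, a i) + (c0 + c1 + c2 + d0 + d1 + d2) = 2 * δ + 3 * s)
    (t : ℂ) (ht : t = d1 + d2 - d0)
    (e0 e1 e2 : ℂ) (he0 : e0 = δ + s - d0 - c0) (he1 : e1 = δ + s - d0 - c1)
    (he2 : e2 = δ + s - d0 - c2)
    (uu vv : Fin m → ℂ) (huu : ∀ i, uu i = δ + s - d0 + x i - a i)
    (hvv : ∀ i, vv i = d1 + d2 - s - x i)
    (U : Fin (m + m + 1 + 1 + 1 + 1 + 1) → ℂ)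
    (hU : U = Fin.cons d1 (Fin.cons d2 (Fin.cons e0 (Fin.cons e1
      (Fin.cons e2 (Fin.append uu vv))))))
    (hL1 : ∀ i j, i ≠ j → f (x i - x j) ≠ 0)
    (hL2 : ∀ i, f (x i + s) ≠ 0)
    (hL3 : ∀ (j : Fin m) (l : ℕ), l < N → f (δ + s + x j - a j + (l : ℂ) * δ) ≠ 0)
    (hL4 : ∀ (i j : Fin m) (l : ℕ), l < N → f (x i - x j + δ + (l : ℂ) * δ) ≠ 0)
    (hL5 : ∀ (k : Fin 3) (l : ℕ), l < N → f (δ + s - ![c0, c1, c2] k + (l : ℂ) * δ) ≠ 0)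
    (hL6 : ∀ (i : Fin m) (k : Fin 3) (l : ℕ), l < N →
      f (x i + δ + s - ![d0, d1, d2] k + (l : ℂ) * δ) ≠ 0)
    (hRt : f t ≠ 0)
    (hR : ∀ (i : Fin (m + m + 1 + 1 + 1 + 1 + 1)) (l : ℕ), l < N →
      f (δ + t - U i + (l : ℂ) * δ) ≠ 0)
    (hd01 : ∀ l : ℕ, l < N → f (d0 - d1 + (l : ℂ) * δ) ≠ 0) :
    ∑ μ ∈ piAntidiag (univ : Finset (Option (Fin m))) N,
        Eterm f δ a x s ![c0, c1, c2] ![d0, d1, d2] (fun i => μ (some i)) =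
      pref f δ N a x s c0 c1 c2 d0 d1 * ∑ k ∈ range (N + 1), E1term f δ t U k := by
  -- the rates at which the parameters `U` move when `(s, c0, d1)` moves by `(z, 2z, z)`
  let r : Fin (m + m + 1 + 1 + 1 + 1 + 1) → ℂ :=
    Fin.cons 1 (Fin.cons 0 (Fin.cons (-1) (Fin.cons 1
      (Fin.cons 1 (Fin.append (fun _ : Fin m => 1) (fun _ : Fin m => 0))))))
  let W : ℂ → Fin (m + m + 1 + 1 + 1 + 1 + 1) → ℂ := fun z i => U i + r i * z
  have hW : ∀ z, W z = Fin.cons (d1 + z) (Fin.cons d2 (Fin.cons (e0 - z) (Fin.cons (e1 + z)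
      (Fin.cons (e2 + z) (Fin.append (fun i => uu i + z) vv))))) := by
    intro z
    funext i
    simp only [W, r, hU]
    refine Fin.cases ?_ (fun i => ?_) i
    · simp only [Fin.cons_zero]; ring
    refine Fin.cases ?_ (fun i => ?_) i
    · simp only [Fin.cons_succ, Fin.cons_zero]; ring
    refine Fin.cases ?_ (fun i => ?_) i
    · simp only [Fin.cons_succ, Fin.cons_zero]; ring
    refine Fin.cases ?_ (fun i => ?_) i
    · simp only [Fin.cons_succ, Fin.cons_zero]; ring
    refine Fin.cases ?_ (fun i => ?_) i
    · simp only [Fin.cons_succ, Fin.cons_zero]; ring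
    refine Fin.addCases (fun i => ?_) (fun i => ?_) i
    · simp only [Fin.cons_succ, Fin.append_left]; ring
    · simp only [Fin.cons_succ, Fin.append_right]; ring
  let L : ℂ → ℂ := fun z => ∑ μ ∈ piAntidiag (univ : Finset (Option (Fin m))) N,
    Eterm f δ a x (s + z) ![c0 + 2 * z, c1, c2] ![d0, d1 + z, d2] (fun i => μ (some i))
  let R : ℂ → ℂ := fun z => pref f δ N a x (s + z) (c0 + 2 * z) c1 c2 d0 (d1 + z) *
    ∑ k ∈ range (N + 1), E1term f δ (t + z) (W z) k
  have hLR : ∀ᶠ z in 𝓝[≠] (0 : ℂ), L z = R z := by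
    have ev2 : ∀ᶠ z in 𝓝[≠] (0 : ℂ), ∀ i, f (x i + (s + z)) ≠ 0 := by
      refine eventually_all.mpr fun i => eventually_nhdsWithin_of_eventually_nhds ?_
      have hc : Continuous fun z : ℂ => f (x i + (s + z)) := hdiff.continuous.comp (by fun_prop)
      exact hc.continuousAt.eventually_ne (by simpa using hL2 i)
    have e3 := eventually_all.mpr fun j => eventually_ne_lt hdiff δ _ 1 (hL3 j)
    have e50 := eventually_ne_lt hdiff δ _ (-1) (hL5 0)
    have e51 := eventually_ne_lt hdiff δ _ 1 (hL5 1)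
    have e52 := eventually_ne_lt hdiff δ _ 1 (hL5 2)
    have e60 := eventually_all.mpr fun i => eventually_ne_lt hdiff δ _ 1 (hL6 i 0)
    have e61 := eventually_all.mpr fun i => eventually_ne_lt hdiff δ _ 0 (hL6 i 1)
    have e62 := eventually_all.mpr fun i => eventually_ne_lt hdiff δ _ 1 (hL6 i 2)
    have et : ∀ᶠ z in 𝓝[≠] (0 : ℂ), f (t + z) ≠ 0 := by
      refine eventually_nhdsWithin_of_eventually_nhds ?_
      have hc : Continuous fun z : ℂ => f (t + z) := hdiff.continuous.comp (by fun_prop)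
      exact hc.continuousAt.eventually_ne (by simpa using hRt)
    have eR := eventually_all.mpr fun i => eventually_ne_lt hdiff δ _ (1 - r i) (hR i)
    have e01 := eventually_ne_lt hdiff δ _ (-1) hd01
    have ed1 : ∀ᶠ z in 𝓝[≠] (0 : ℂ), ∀ l < N, f (d1 + (l : ℂ) * δ + z) ≠ 0 :=
      eventually_forall_lt fun l _ => eventually_shift_ne hdiff hf _
    have esx : ∀ᶠ z in 𝓝[≠] (0 : ℂ), ∀ (i : Fin m), ∀ l < N,
        f (δ + s + x i + (l : ℂ) * δ + z) ≠ 0 :=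
      eventually_all.mpr fun i => eventually_forall_lt fun l _ => eventually_shift_ne hdiff hf _
    filter_upwards [ev2, e3, e50, e51, e52, e60, e61, e62, et, eR, e01, ed1, esx] with
      z ev2 e3 e50 e51 e52 e60 e61 e62 et eR e01 ed1 esx
    simp only [L, R]
    refine generic_identity hodd hdiff hf hRiem δ hδ m N a x (s + z) (c0 + 2 * z) c1 c2 d0 (d1 + z)
      d2 hd2 (by linear_combination hbal) (t + z) (by rw [ht]; ring) (e0 - z) (e1 + z) (e2 + z)
      (by rw [he0]; ring) (by rw [he1]; ring) (by rw [he2]; ring) (fun i => uu i + z) vv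
      (fun i => by rw [huu]; ring) (fun i => by rw [hvv]; ring) (W z) (hW z) hL1 ev2 ?_ hL4
      ?_ ?_ et ?_ ?_ ?_ ?_
    · intro j l hl
      convert e3 j l hl using 2; ring
    · intro k l hl
      fin_cases k
      · convert e50 l hl using 2; simp; ring
      · convert e51 l hl using 2; simp; ring
      · convert e52 l hl using 2; simp; ring
    · intro i k l hl
      fin_cases k
      · convert e60 i l hl using 2; simp; ring
      · convert e61 i l hl using 2; simp; ring
      · convert e62 i l hl using 2; simp; ring
    · intro i l hl
      convert eR i l hl using 2; simp only [W]; ring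
    · intro l hl
      convert e01 l hl using 2; ring
    · intro l hl
      convert ed1 l hl using 2; ring
    · intro i l hl
      convert esx i l hl using 2; ring
  have hLc : ContinuousAt L 0 := by
    refine tendsto_finsetSum _ fun μ hμ => ?_
    refine Eterm_continuousAt (N := N) hdiff δ a x (fun z => s + z)
      (fun z => ![c0 + 2 * z, c1, c2]) (fun z => ![d0, d1 + z, d2]) 0 (by fun_prop)
      ?_ ?_ ?_ ?_ ?_ ?_ _ ?_
    · intro k; fin_cases k <;> simp <;> fun_prop
    · intro k; fin_cases k <;> simp <;> fun_prop
    · simpa using hL2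
    · simpa using hL3
    · simpa using hL5
    · simpa using hL6
    · have := (mem_piAntidiag.mp hμ).1
      rw [Fintype.sum_option] at this
      omega
  have hRc : ContinuousAt R 0 := by
    refine ContinuousAt.mul ?_ (tendsto_finsetSum _ fun k hk => ?_)
    · refine pref_continuousAt hdiff δ a x (fun z => s + z) (fun z => c0 + 2 * z)
        (fun z => d1 + z) c1 c2 d0 0 (by fun_prop) (by fun_prop) (by fun_prop) ?_ ?_ ?_ ?_
      · simpa using hL3
      · simpa using hL5
      · intro i l hl
        convert hL6 i 1 l hl using 2; simp; ring
      · simpa using hd01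
    · refine E1term_continuousAt (N := N) hdiff δ (fun z => t + z) W 0 (by fun_prop)
        (fun i => ?_) (by simpa using hRt) ?_ k (by simpa [Nat.lt_succ_iff] using hk)
      · simp only [W]; fun_prop
      · simpa [W] using hR
  have hlim : L 0 = R 0 := tendsto_nhds_unique_of_eventuallyEq
    (hLc.tendsto.mono_left nhdsWithin_le_nhds) (hRc.tendsto.mono_left nhdsWithin_le_nhds) hLR
  have hW0 : W 0 = U := by funext i; simp [W]
  simpa only [L, R, hW0, add_zero, mul_zero] using hlim

end

/-- Transformation (3.15) from the balanced `E^{m,3}` to `_{2m+8}E_{2m+7}`. -/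
theorem E_m3_to_E_2m8
    (f : ℂ → ℂ) (hf : f ≠ 0) (hodd : ∀ t : ℂ, f (-t) = -f t) (hdiff : Differentiable ℂ f)
    (hRiem : ∀ x y u v : ℂ,
      f (x + y) * f (x - y) * f (u + v) * f (u - v) =
        f (x + u) * f (x - u) * f (y + v) * f (y - v)
          - f (x + v) * f (x - v) * f (y + u) * f (y - u))
    (δ : ℂ) (hδ : ∀ k : ℤ, k ≠ 0 → f ((k : ℂ) * δ) ≠ 0)
    (m N : ℕ) (a x : Fin m → ℂ) (s c0 c1 c2 d0 d1 d2 : ℂ)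
    (hd2 : d2 = -(N : ℂ) * δ)
    (hbal : (∑ i, a i) + (c0 + c1 + c2 + d0 + d1 + d2) = 2 * δ + 3 * s)
    (t : ℂ) (ht : t = d1 + d2 - d0)
    (e0 e1 e2 : ℂ) (he0 : e0 = δ + s - d0 - c0) (he1 : e1 = δ + s - d0 - c1)
    (he2 : e2 = δ + s - d0 - c2)
    (uu vv : Fin m → ℂ) (huu : ∀ i, uu i = δ + s - d0 + x i - a i)
    (hvv : ∀ i, vv i = d1 + d2 - s - x i)
    (U : Fin (m + m + 1 + 1 + 1 + 1 + 1) → ℂ)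
    (hU : U = Fin.cons d1 (Fin.cons d2 (Fin.cons e0 (Fin.cons e1
      (Fin.cons e2 (Fin.append uu vv))))))
    (hL1 : ∀ i j, i ≠ j → f (x i - x j) ≠ 0)
    (hL2 : ∀ i, f (x i + s) ≠ 0)
    (hL3 : ∀ (j : Fin m) (l : ℕ), l < N → f (δ + s + x j - a j + (l : ℂ) * δ) ≠ 0)
    (hL4 : ∀ (i j : Fin m) (l : ℕ), l < N → f (x i - x j + δ + (l : ℂ) * δ) ≠ 0)
    (hL5 : ∀ (k : Fin 3) (l : ℕ), l < N → f (δ + s - ![c0, c1, c2] k + (l : ℂ) * δ) ≠ 0)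
    (hL6 : ∀ (i : Fin m) (k : Fin 3) (l : ℕ), l < N →
      f (x i + δ + s - ![d0, d1, d2] k + (l : ℂ) * δ) ≠ 0)
    (hRt : f t ≠ 0)
    (hR : ∀ (i : Fin (m + m + 1 + 1 + 1 + 1 + 1)) (l : ℕ), l < N →
      f (δ + t - U i + (l : ℂ) * δ) ≠ 0)
    (hd01 : ∀ l : ℕ, l < N → f (d0 - d1 + (l : ℂ) * δ) ≠ 0) :
    Evw f δ a x s ![c0, c1, c2] ![d0, d1, d2] =
      (sf f δ d0 N * sf f δ (δ + s - c0 - d1) N * sf f δ (δ + s - c1 - d1) N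
          * sf f δ (δ + s - c2 - d1) N)
        / (sf f δ (d0 - d1) N * sf f δ (δ + s - c0) N * sf f δ (δ + s - c1) N
          * sf f δ (δ + s - c2) N)
        * (∏ i, sf f δ (δ + s + x i) N * sf f δ (δ + s + x i - a i - d1) N
            / (sf f δ (δ + s + x i - a i) N * sf f δ (δ + s + x i - d1) N))
        * E1 f δ t U := by
  have hU1 : U (Fin.succ 0) = d2 := by rw [hU, Fin.cons_succ, Fin.cons_zero]
  rw [Evw_finite hodd δ s c0 c1 c2 d0 d1 d2 hd2 a x, E1_finite hodd δ d2 t hd2 U _ hU1]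
  exact finite_identity hodd hdiff (Function.ne_iff.mp hf) hRiem δ hδ m N a x s c0 c1 c2 d0 d1 d2
    hd2 hbal t ht e0 e1 e2 he0 he1 he2 uu vv huu hvv U hU hL1 hL2 hL3 hL4 hL5 hL6 hRt hR hd01
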